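/- Let (ρ, u) be a weak solution of the stationary isentropic Navier–Stokes system on ℝ³ with exponent γ satisfying 3 ≤ γ < 6 and potential G ∈ D₀^{1, 6γ/(5γ−6)}(ℝ³). If ρ ∈ L^γ(ℝ³), then u = 0 almost everywhere. -/

import Mathlib

noncomputable section

open MeasureTheory Metric Filter Topology Set

/-- Three-dimensional Euclidean space. -/
abbrev E3 : Type := EuclideanSpace ℝ (Fin 3)

/-- Partial derivative of a scalar function in the `i`-th coordinate direction. -/
def pd (f : E3 → ℝ) (i : Fin 3) : E3 → ℝ :=
  fun x => fderiv ℝ f x (EuclideanSpace.single i 1)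

/-- Classical gradient matrix of a vector field: `(tgrad φ x) i j = ∂_j φ_i (x)`. -/
def tgrad (φ : E3 → Fin 3 → ℝ) (x : E3) : Fin 3 → Fin 3 → ℝ :=
  fun i j => pd (fun y => φ y i) j x

/-- Smooth compactly supported scalar test function with support in `Ω`. -/
def IsTest (Ω : Set E3) (φ : E3 → ℝ) : Prop :=
  ContDiff ℝ ((⊤ : ℕ∞) : WithTop ℕ∞) φ ∧ HasCompactSupport φ ∧ tsupport φ ⊆ Ω

/-- `C^n` compactly supported vector-valued test function with support in `Ω`. -/
def IsTestVec (n : WithTop ℕ∞) (Ω : Set E3) (φ : E3 → Fin 3 → ℝ) : Prop :=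
  ContDiff ℝ n φ ∧ HasCompactSupport φ ∧ tsupport φ ⊆ Ω

/-- The Newtonian viscous stress tensor
`S(M) = μ (M + Mᵗ - (2/3) (tr M) I) + η (tr M) I`. -/
def Smat (μ η : ℝ) (M : Fin 3 → Fin 3 → ℝ) : Fin 3 → Fin 3 → ℝ :=
  fun i j =>
    μ * (M i j + M j i - (2 / 3) * (∑ k, M k k) * (if i = j then (1 : ℝ) else 0))
      + η * (∑ k, M k k) * (if i = j then (1 : ℝ) else 0)

/-- `dG` is the weak gradient of the scalar function `G` on `Ω`. -/
def HasWeakGradOn (Ω : Set E3) (G : E3 → ℝ) (dG : E3 → Fin 3 → ℝ) : Prop :=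
  ∀ φ : E3 → ℝ, IsTest Ω φ → ∀ i : Fin 3,
    ∫ x in Ω, G x * pd φ i x = - ∫ x in Ω, dG x i * φ x

/-- `du` is the weak gradient (Jacobian) of the vector field `u` on `Ω`. -/
def HasWeakGradVecOn (Ω : Set E3) (u : E3 → Fin 3 → ℝ) (du : E3 → Fin 3 → Fin 3 → ℝ) : Prop :=
  ∀ φ : E3 → ℝ, IsTest Ω φ → ∀ i j : Fin 3,
    ∫ x in Ω, u x i * pd φ j x = - ∫ x in Ω, du x i j * φ x

/-- `u ∈ D₀^{1,2}(Ω; ℝ³)` with weak gradient `du`: `u` is locally integrable on `Ω`, its weak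
gradient belongs to `L²(Ω)`, and `u` can be approximated by smooth compactly supported fields
`uₙ` with `∇uₙ → ∇u` in `L²(Ω)` and `uₙ → u` in `L⁶(Ω)`. -/
def MemD012 (Ω : Set E3) (u : E3 → Fin 3 → ℝ) (du : E3 → Fin 3 → Fin 3 → ℝ) : Prop :=
  LocallyIntegrableOn u Ω volume ∧
  HasWeakGradVecOn Ω u du ∧
  MemLp du 2 (volume.restrict Ω) ∧
  ∃ un : ℕ → E3 → Fin 3 → ℝ,
    (∀ n, IsTestVec ((⊤ : ℕ∞) : WithTop ℕ∞) Ω (un n)) ∧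
    Tendsto (fun n => eLpNorm (fun x => tgrad (un n) x - du x) 2 (volume.restrict Ω))
      atTop (𝓝 0) ∧
    Tendsto (fun n => eLpNorm (fun x => un n x - u x) 6 (volume.restrict Ω)) atTop (𝓝 0)

/-- `G ∈ D₀^{1,q}(Ω)` with weak gradient `dG`. -/
def MemD01q (Ω : Set E3) (G : E3 → ℝ) (dG : E3 → Fin 3 → ℝ) (q : ℝ) : Prop :=
  HasWeakGradOn Ω G dG ∧
  MemLp dG (ENNReal.ofReal q) (volume.restrict Ω) ∧
  ∃ Gn : ℕ → E3 → ℝ,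
    (∀ n, IsTest Ω (Gn n)) ∧
    Tendsto (fun n =>
        eLpNorm (fun x => (fun i => pd (Gn n) i x) - dG x) (ENNReal.ofReal q)
          (volume.restrict Ω)) atTop (𝓝 0) ∧
    ∀ K : Set E3, IsCompact K → K ⊆ Ω →
      Tendsto (fun n => ∫ x in K, |Gn n x - G x|) atTop (𝓝 0)

/-- `G ∈ W^{1,∞}(Ω)` with weak gradient `dG`: both `G` and `∇G` are essentially bounded. -/
def MemW1inf (Ω : Set E3) (G : E3 → ℝ) (dG : E3 → Fin 3 → ℝ) : Prop :=
  HasWeakGradOn Ω G dG ∧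
  MemLp G ⊤ (volume.restrict Ω) ∧ MemLp dG ⊤ (volume.restrict Ω)

/-- Weak solution `(ρ, u)` (with weak gradient `du` of `u` and weak gradient `dG` of `G`) of the
stationary barotropic Navier–Stokes system
`div(ρu) = 0`, `div(ρ u⊗u) + ∇p(ρ) − div S(∇u) = ρ∇G` on `Ω` with no-slip boundary condition. -/
structure WeakSolution (Ω : Set E3) (μ η : ℝ) (p : ℝ → ℝ)
    (G : E3 → ℝ) (dG : E3 → Fin 3 → ℝ)
    (ρ : E3 → ℝ) (u : E3 → Fin 3 → ℝ) (du : E3 → Fin 3 → Fin 3 → ℝ) : Prop where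
  aemeas_ρ : AEMeasurable ρ volume
  aemeas_u : AEMeasurable u volume
  weakGrad_G : HasWeakGradOn Ω G dG
  ρ_nonneg : ∀ᵐ x ∂(volume.restrict Ω), 0 ≤ ρ x
  ρu_locInt : LocallyIntegrableOn (fun x => fun i => ρ x * u x i) (closure Ω) volume
  mass : ∀ φ : E3 → ℝ, ContDiff ℝ ((⊤ : ℕ∞) : WithTop ℕ∞) φ → HasCompactSupport φ →
    ∫ x in Ω, ρ x * (∑ i, u x i * pd φ i x) = 0
  ρ_locInt : LocallyIntegrableOn ρ Ω volume
  ρu2_locInt : LocallyIntegrableOn (fun x => ρ x * (∑ i, (u x i) ^ 2)) Ω volume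
  pρ_locInt : LocallyIntegrableOn (fun x => p (ρ x)) Ω volume
  ρdG_locInt : LocallyIntegrableOn (fun x => fun i => ρ x * dG x i) Ω volume
  u_D012 : MemD012 Ω u du
  momentum : ∀ φ : E3 → Fin 3 → ℝ, IsTestVec 1 Ω φ →
    ∫ x in Ω, ((∑ i, ∑ j, ρ x * u x i * u x j * tgrad φ x i j)
        + p (ρ x) * (∑ i, tgrad φ x i i))
      = (∫ x in Ω, ∑ i, ∑ j, Smat μ η (du x) i j * tgrad φ x i j)
        - ∫ x in Ω, ∑ i, ρ x * dG x i * φ x i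

/-- Weak solution of the stationary isentropic Navier–Stokes system on `ℝ³`
with pressure `p(ρ) = ρ^γ`. -/
def IsentropicWeakSolution (μ η γ : ℝ) (G : E3 → ℝ) (dG : E3 → Fin 3 → ℝ)
    (ρ : E3 → ℝ) (u : E3 → Fin 3 → ℝ) (du : E3 → Fin 3 → Fin 3 → ℝ) : Prop :=
  WeakSolution univ μ η (fun s => s ^ γ) G dG ρ u du

/-- The `L^r` norm of a scalar function on a set. -/
def lpNormOn (f : E3 → ℝ) (r : ℝ) (s : Set E3) : ℝ :=
  (∫ x in s, |f x| ^ r) ^ (1 / r)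

/-- Euclidean norm of a vector in `ℝ³` (represented as `Fin 3 → ℝ`). -/
def vnorm (v : Fin 3 → ℝ) : ℝ := Real.sqrt (∑ i, (v i) ^ 2)

/-- The `L^r` norm of a vector field on a set. -/
def vecLpNormOn (u : E3 → Fin 3 → ℝ) (r : ℝ) (s : Set E3) : ℝ :=
  (∫ x in s, (vnorm (u x)) ^ r) ^ (1 / r)

/-- The exponent `f(α, γ)` from the higher-integrability propositions. -/
def fExp (α γ : ℝ) : ℝ :=
  if 6 ≤ γ then
    (if (2 * γ - 3) / (γ * (γ - 1)) ≤ α then α - 3 / (2 * γ)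
     else α / γ + 1 / (2 * γ) - 3 / γ ^ 2)
  else
    (if 3 / (2 * (γ - 1)) ≤ α then α - 3 / (2 * γ)
     else if 1 / (2 * (γ - 1)) ≤ α then α / γ
     else α / γ ^ 2 + 1 / (2 * γ ^ 2))

/-- The exponent `g(α, β, γ)`. -/
def gExp (α β γ : ℝ) : ℝ :=
  if fExp α γ ≤ (γ - 3) / (γ * (3 * γ - 5)) then
    γ * (1 - fExp α γ) * (6 - β) / (3 * β * (γ - 1))
  else (1 - γ * fExp α γ) * (6 - β) / (2 * β)

open scoped ENNReal ContDiff Convolution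

/-!
Testing the momentum equation with `∇ψ` and splitting the convective term `ρ u ⊗ u` by Young's
inequality bounds `|∫ ρ^γ Δψ|` by `ε ∫ ρ^γ |∇²ψ| + A ‖Δψ‖₂`. The bound passes to the mollified
pressure, which lies in `L²`. There `‖∇²ψ‖₂ = ‖Δψ‖₂`, and the functions `Δψ` are dense by the
Liouville theorem for harmonic functions, so the `ε`-term is absorbed. Hence `ρ^γ ∈ L²`, and
`ρ ∈ L⁶` because `3 ≤ γ ≤ 6`.

At this integrability the DiPerna–Lions commutator of `u` with a mollifier tends to zero when paired
with functions bounded in `L³`, so the continuity equation renormalises: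
`div (b(ρ) u) + (ρ b'(ρ) - b(ρ)) div u = 0`. Taking for `b` truncations of `s ↦ s^γ` and removing
the truncation and the spatial cutoff yields `∫ ρ^γ div u = 0`.

Finally the momentum equation is tested with test fields approximating `u`. The convective and force
terms vanish by the continuity equation and the pressure term by the previous step, leaving
`∫ S(∇u) : ∇u = 0`. Ellipticity of `S` forces `∇u = 0`, and Sobolev's inequality `u = 0`.
-/

section LpSpaces

variable {α : Type*} [MeasurableSpace α] {ν : Measure α} {p q r : ℝ≥0∞}

lemma lpNorm_mul_le [p.HolderTriple q r] {f g : α → ℝ} (hf : MemLp f p ν) (hg : MemLp g q ν) :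
    lpNorm (fun x => f x * g x) r ν ≤ lpNorm f p ν * lpNorm g q ν := by
  have holder := eLpNorm_smul_le_mul_eLpNorm (p := p) (q := q) (r := r) hg.1 hf.1
  have := ENNReal.toReal_mono (ENNReal.mul_ne_top hf.2.ne hg.2.ne) holder
  rwa [ENNReal.toReal_mul, toReal_eLpNorm hf.1, toReal_eLpNorm hg.1,
    toReal_eLpNorm (hf.1.smul hg.1)] at this

lemma abs_integral_mul_le_lpNorm_mul [p.HolderConjugate q] {f g : α → ℝ} (hf : MemLp f p ν)
    (hg : MemLp g q ν) : |∫ x, f x * g x ∂ν| ≤ lpNorm f p ν * lpNorm g q ν :=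
  calc |∫ x, f x * g x ∂ν| ≤ ∫ x, |f x * g x| ∂ν := abs_integral_le_integral_abs
    _ = lpNorm (fun x => f x * g x) 1 ν := (lpNorm_one_eq_integral_norm (hf.1.mul hg.1)).symm
    _ ≤ lpNorm f p ν * lpNorm g q ν := lpNorm_mul_le hf hg

lemma integrable_mul_of_memLp [p.HolderConjugate q] {f g : α → ℝ} (hf : MemLp f p ν)
    (hg : MemLp g q ν) : Integrable (fun x => f x * g x) ν :=
  memLp_one_iff_integrable.1 (hg.mul hf)

lemma integral_finsetSum_finsetSum {κ κ' E : Type*} [NormedAddCommGroup E] [NormedSpace ℝ E]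
    (s : Finset κ) (t : Finset κ') {F : κ → κ' → α → E} (hF : ∀ k l, Integrable (F k l) ν) :
    ∫ x, ∑ k ∈ s, ∑ l ∈ t, F k l x ∂ν = ∑ k ∈ s, ∑ l ∈ t, ∫ x, F k l x ∂ν := by
  rw [integral_finsetSum _ fun k _ => integrable_finsetSum _ fun l _ => hF k l]
  simp only [integral_finsetSum _ fun l _ => hF _ l]

lemma lpNorm_fun_sum_le {κ E : Type*} [NormedAddCommGroup E] (hp : 1 ≤ p) (s : Finset κ)
    {f : κ → α → E} (hf : ∀ k, MemLp (f k) p ν) :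
    lpNorm (fun x => ∑ k ∈ s, f k x) p ν ≤ ∑ k ∈ s, lpNorm (f k) p ν := by
  simpa only [Finset.sum_fn] using lpNorm_sum_le (s := s) (fun k _ => hf k) hp

lemma lpNorm_two_sq_eq_integral {f : α → ℝ} (hf : MemLp f 2 ν) :
    lpNorm f 2 ν ^ 2 = ∫ x, f x ^ 2 ∂ν := by
  have hint : 0 ≤ ∫ x, f x ^ 2 ∂ν := integral_nonneg fun x => sq_nonneg _
  rw [lpNorm_eq_integral_norm_rpow_toReal (by norm_num) (by norm_num) hf.1]
  simp only [ENNReal.toReal_ofNat, Real.rpow_ofNat, Real.norm_eq_abs, sq_abs]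
  rw [← Real.rpow_natCast, ← Real.rpow_mul hint]
  simp

/-- Convergence in `L^p` along a filter of a family of `p`-integrable functions. The limit is a
function rather than an element of `Lp`, and all functions involved are required to lie in `L^p`,
so that `lpNorm` does not take its junk value. -/
structure TendstoInLp {ι E : Type*} [NormedAddCommGroup E] (p : ℝ≥0∞) (ν : Measure α)
    (f : ι → α → E) (l : Filter ι) (g : α → E) : Prop where
  memLp : ∀ n, MemLp (f n) p ν
  memLp_limit : MemLp g p ν
  tendsto_lpNorm_sub : Tendsto (fun n => lpNorm (f n - g) p ν) l (𝓝 0)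

namespace TendstoInLp

variable {ι E : Type*} [NormedAddCommGroup E] {l : Filter ι}

lemma const {f : α → E} (hf : MemLp f p ν) : TendstoInLp p ν (fun _ : ι => f) l f :=
  ⟨fun _ => hf, hf, by simp [tendsto_const_nhds]⟩

lemma tendsto_lpNorm (hp : 1 ≤ p) {f : ι → α → E} {g : α → E} (h : TendstoInLp p ν f l g) :
    Tendsto (fun n => lpNorm (f n) p ν) l (𝓝 (lpNorm g p ν)) := by
  rw [tendsto_iff_norm_sub_tendsto_zero]
  refine squeeze_zero (fun _ => norm_nonneg _) (fun n => ?_) h.tendsto_lpNorm_sub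
  have upper := lpNorm_le_lpNorm_add_lpNorm_sub (f := f n) h.memLp_limit hp
  have lower := lpNorm_le_lpNorm_add_lpNorm_sub' (f := g) (h.memLp n) hp
  rw [lpNorm_sub_comm] at upper lower
  rw [Real.norm_eq_abs, abs_le]
  constructor <;> linarith

lemma add (hp : 1 ≤ p) {f f' : ι → α → E} {g g' : α → E} (h : TendstoInLp p ν f l g)
    (h' : TendstoInLp p ν f' l g') :
    TendstoInLp p ν (fun n x => f n x + f' n x) l (fun x => g x + g' x) := by
  refine ⟨fun n => (h.memLp n).add (h'.memLp n), h.memLp_limit.add h'.memLp_limit, ?_⟩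
  refine squeeze_zero (fun _ => lpNorm_nonneg) (fun n => ?_)
    (by simpa using h.tendsto_lpNorm_sub.add h'.tendsto_lpNorm_sub)
  have split : (fun x => f n x + f' n x) - (fun x => g x + g' x) = (f n - g) + (f' n - g') :=
    add_sub_add_comm _ _ _ _
  rw [split]
  exact lpNorm_add_le ((h.memLp n).sub h.memLp_limit) hp

lemma const_mul {f : ι → α → ℝ} {g : α → ℝ} (h : TendstoInLp p ν f l g) (c : ℝ) :
    TendstoInLp p ν (fun n x => c * f n x) l (fun x => c * g x) := by
  refine ⟨fun n => (h.memLp n).const_mul c, h.memLp_limit.const_mul c, ?_⟩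
  have hc := h.tendsto_lpNorm_sub.const_mul ‖c‖
  rw [mul_zero] at hc
  refine hc.congr fun n => ?_
  rw [← coe_nnnorm, ← lpNorm_const_smul, smul_sub]
  rfl

lemma sub (hp : 1 ≤ p) {f f' : ι → α → ℝ} {g g' : α → ℝ} (h : TendstoInLp p ν f l g)
    (h' : TendstoInLp p ν f' l g') :
    TendstoInLp p ν (fun n x => f n x - f' n x) l (fun x => g x - g' x) := by
  simpa only [neg_one_mul, ← sub_eq_add_neg] using h.add hp (h'.const_mul (-1))

lemma sum {κ : Type*} (hp : 1 ≤ p) (s : Finset κ) {f : κ → ι → α → E} {g : κ → α → E}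
    (h : ∀ k, TendstoInLp p ν (f k) l (g k)) :
    TendstoInLp p ν (fun n x => ∑ k ∈ s, f k n x) l (fun x => ∑ k ∈ s, g k x) := by
  classical
  induction s using Finset.induction_on with
  | empty => simpa using const (MemLp.zero' : MemLp (fun _ => (0 : E)) p ν)
  | insert k s hk ih => simpa only [Finset.sum_insert hk] using (h k).add hp ih

lemma mul [p.HolderTriple q r] (hp : 1 ≤ p) (hr : 1 ≤ r) {f f' : ι → α → ℝ} {g g' : α → ℝ}
    (h : TendstoInLp p ν f l g) (h' : TendstoInLp q ν f' l g') :
    TendstoInLp r ν (fun n x => f n x * f' n x) l (fun x => g x * g' x) := by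
  refine ⟨fun n => (h'.memLp n).mul (h.memLp n), h'.memLp_limit.mul h.memLp_limit, ?_⟩
  have key : ∀ n, lpNorm ((fun x => f n x * f' n x) - fun x => g x * g' x) r ν ≤
      lpNorm (f n) p ν * lpNorm (f' n - g') q ν + lpNorm (f n - g) p ν * lpNorm g' q ν := by
    intro n
    have hsub := (h.memLp n).sub h.memLp_limit
    have hsub' := (h'.memLp n).sub h'.memLp_limit
    have split : ((fun x => f n x * f' n x) - fun x => g x * g' x) =
        (fun x => f n x * (f' n - g') x) + fun x => (f n - g) x * g' x := by
      funext x
      simp only [Pi.add_apply, Pi.sub_apply]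
      ring
    rw [split]
    exact (lpNorm_add_le (hsub'.mul (h.memLp n)) hr).trans
      (add_le_add (lpNorm_mul_le (h.memLp n) hsub') (lpNorm_mul_le hsub h'.memLp_limit))
  refine squeeze_zero (fun _ => lpNorm_nonneg) key ?_
  simpa using ((h.tendsto_lpNorm hp).mul h'.tendsto_lpNorm_sub).add
    (h.tendsto_lpNorm_sub.mul_const (lpNorm g' q ν))

lemma tendsto_integral {f : ι → α → ℝ} {g : α → ℝ} (h : TendstoInLp 1 ν f l g) :
    Tendsto (fun n => ∫ x, f n x ∂ν) l (𝓝 (∫ x, g x ∂ν)) := by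
  rw [tendsto_iff_norm_sub_tendsto_zero]
  refine squeeze_zero (fun _ => norm_nonneg _) (fun n => ?_) h.tendsto_lpNorm_sub
  rw [← integral_sub (memLp_one_iff_integrable.1 (h.memLp n))
    (memLp_one_iff_integrable.1 h.memLp_limit),
    lpNorm_one_eq_integral_norm ((h.memLp n).sub h.memLp_limit).1]
  exact norm_integral_le_integral_norm _

lemma of_tendsto_eLpNorm [l.NeBot] {f : ι → α → E} {g : α → E} (hf : ∀ n, MemLp (f n) p ν)
    (hg : AEStronglyMeasurable g ν)
    (h : Tendsto (fun n => eLpNorm (fun x => f n x - g x) p ν) l (𝓝 0)) :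
    TendstoInLp p ν f l g := by
  obtain ⟨n, hn⟩ := (h.eventually_lt_const ENNReal.zero_lt_top).exists
  have hsub : MemLp (f n - g) p ν := ⟨(hf n).1.sub hg, hn⟩
  refine ⟨hf, by simpa using (hf n).sub hsub, ?_⟩
  exact ((ENNReal.tendsto_toReal ENNReal.zero_ne_top).comp h).congr fun n =>
    toReal_eLpNorm ((hf n).1.sub hg)

lemma eval {κ : Type*} [Fintype κ] {F : κ → Type*} [∀ k, NormedAddCommGroup (F k)]
    {f : ι → α → ∀ k, F k} {g : α → ∀ k, F k} (h : TendstoInLp p ν f l g) (k : κ) :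
    TendstoInLp p ν (fun n x => f n x k) l (fun x => g x k) := by
  refine ⟨fun n => (h.memLp n).eval k, h.memLp_limit.eval k, ?_⟩
  refine squeeze_zero (fun _ => lpNorm_nonneg) (fun n => ?_) h.tendsto_lpNorm_sub
  have hsub := (h.memLp n).sub h.memLp_limit
  rw [← lpNorm_norm hsub.1]
  exact lpNorm_mono_real hsub.norm fun x => norm_le_pi_norm ((f n - g) x) k

end TendstoInLp

end LpSpaces

section Translation

variable {V E : Type*} [NormedAddCommGroup V] [MeasurableSpace V] [BorelSpace V]
  {ν : Measure V} [ν.IsAddRightInvariant] [NormedAddCommGroup E] {p : ℝ≥0∞}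

lemma memLp_comp_sub_right {f : V → E} (hf : MemLp f p ν) (h : V) :
    MemLp (fun x => f (x - h)) p ν :=
  hf.comp_measurePreserving (measurePreserving_sub_right ν h)

lemma lpNorm_comp_sub_right {f : V → E} (hf : AEStronglyMeasurable f ν) (h : V) :
    lpNorm (fun x => f (x - h)) p ν = lpNorm f p ν := by
  have hmp := measurePreserving_sub_right ν h
  change lpNorm (f ∘ (· - h)) p ν = _
  rw [← toReal_eLpNorm hf, ← toReal_eLpNorm (hf.comp_measurePreserving hmp),
    eLpNorm_comp_measurePreserving hf hmp]

lemma TendstoInLp.comp_sub_right {ι : Type*} {l : Filter ι} {f : ι → V → E} {g : V → E}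
    (h : TendstoInLp p ν f l g) (a : V) :
    TendstoInLp p ν (fun n x => f n (x - a)) l (fun x => g (x - a)) := by
  refine ⟨fun n => memLp_comp_sub_right (h.memLp n) a, memLp_comp_sub_right h.memLp_limit a, ?_⟩
  refine h.tendsto_lpNorm_sub.congr fun n => ?_
  exact (lpNorm_comp_sub_right ((h.memLp n).sub h.memLp_limit).1 a).symm

lemma lpNorm_translate_sub_le_add (hp : 1 ≤ p) {f g : V → E} (hf : MemLp f p ν)
    (hg : MemLp g p ν) (h : V) :
    lpNorm (fun x => f (x - h) - f x) p ν ≤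
      lpNorm (fun x => g (x - h) - g x) p ν + 2 * lpNorm (f - g) p ν := by
  have hfg := hf.sub hg
  have hfg' := memLp_comp_sub_right hfg h
  have hg' := (memLp_comp_sub_right hg h).sub hg
  have split : (fun x => f (x - h) - f x) =
      (fun x => g (x - h) - g x) + ((fun x => (f - g) (x - h)) - (f - g)) := by
    funext x
    simp only [Pi.add_apply, Pi.sub_apply]
    abel
  rw [split, two_mul]
  refine (lpNorm_add_le hg' hp).trans (add_le_add le_rfl ((lpNorm_sub_le hfg' hp).trans ?_))
  rw [lpNorm_comp_sub_right hfg.1]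

lemma tendsto_lpNorm_translate_sub [IsLocallyFiniteMeasure ν] [ν.InnerRegularCompactLTTop]
    (hp : 1 ≤ p) (hp' : p ≠ ⊤) {f : V → E} (hf : MemLp f p ν) :
    Tendsto (fun h : V => lpNorm (fun x => f (x - h) - f x) p ν) (𝓝 0) (𝓝 0) := by
  have : Fact (1 ≤ p) := ⟨hp⟩
  let shift : C(V × V, V) := ⟨fun z => z.2 - z.1, by fun_prop⟩
  have hmp : ∀ h, MeasurePreserving (shift.curry h) ν ν := fun h => measurePreserving_sub_right ν h
  have hcont := Continuous.compMeasurePreservingLp (f := fun _ : V => hf.toLp f)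
    (g := shift.curry) continuous_const shift.curry.continuous hmp hp'
  have hlim := (tendsto_iff_dist_tendsto_zero.1 (hcont.tendsto 0))
  refine hlim.congr fun h => ?_
  rw [Lp.toLp_compMeasurePreserving hf, Lp.toLp_compMeasurePreserving hf, dist_eq_norm,
    ← MemLp.toLp_sub, Lp.norm_toLp, toReal_eLpNorm (((hf.comp_measurePreserving (hmp h)).sub
      (hf.comp_measurePreserving (hmp 0))).1)]
  congr 1
  funext x
  simp [shift]

end Translation

section Calculus

variable {f g : E3 → ℝ}

lemma contDiff_pd {m n : ℕ∞ω} (hf : ContDiff ℝ n f) (hmn : m + 1 ≤ n) (i : Fin 3) :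
    ContDiff ℝ m (pd f i) :=
  (hf.fderiv_right hmn).clm_apply contDiff_const

lemma continuous_pd (hf : ContDiff ℝ 1 f) (i : Fin 3) : Continuous (pd f i) :=
  (contDiff_pd (m := 0) hf (by norm_num) i).continuous

lemma hasCompactSupport_pd (hf : HasCompactSupport f) (i : Fin 3) :
    HasCompactSupport (pd f i) :=
  HasCompactSupport.fderiv_apply (𝕜 := ℝ) hf _

lemma pd_fun_add (hf : Differentiable ℝ f) (hg : Differentiable ℝ g) (i : Fin 3) :
    pd (fun y => f y + g y) i = fun x => pd f i x + pd g i x := by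
  funext x
  simp only [pd, fderiv_fun_add hf.differentiableAt hg.differentiableAt, add_apply]

lemma pd_fun_mul (hf : Differentiable ℝ f) (hg : Differentiable ℝ g) (i : Fin 3) :
    pd (fun y => f y * g y) i = fun x => f x * pd g i x + pd f i x * g x := by
  funext x
  simp only [pd, fderiv_fun_mul hf.differentiableAt hg.differentiableAt, add_apply,
    smul_apply, smul_eq_mul]
  ring

lemma pd_const_mul (hf : Differentiable ℝ f) (c : ℝ) (i : Fin 3) :
    pd (fun y => c * f y) i = fun x => c * pd f i x := by
  funext x
  simp only [pd, fderiv_const_mul hf.differentiableAt, smul_apply, smul_eq_mul]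

lemma pd_comp_sub_right (f : E3 → ℝ) (a : E3) (i : Fin 3) :
    pd (fun y => f (y - a)) i = fun x => pd f i (x - a) := by
  funext x
  simp only [pd, fderiv_comp_sub]

lemma pd_comp_smul (f : E3 → ℝ) (c : ℝ) (i : Fin 3) :
    pd (fun y => f (c • y)) i = fun x => c * pd f i (c • x) := by
  funext x
  simp only [pd, fderiv_comp_smul, smul_apply, smul_eq_mul]

lemma pd_comp_sub_left (f : E3 → ℝ) (a : E3) (i : Fin 3) :
    pd (fun y => f (a - y)) i = fun x => -pd f i (a - x) := by
  have hneg : (fun y => f (a - y)) = fun y => (fun z => f ((-1 : ℝ) • z)) (y - a) := by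
    funext y
    simp
  rw [hneg, pd_comp_sub_right (fun z => f ((-1 : ℝ) • z)), pd_comp_smul]
  funext x
  simp

lemma pd_comm (hf : ContDiff ℝ 2 f) (i j : Fin 3) : pd (pd f i) j = pd (pd f j) i := by
  funext x
  have hd : DifferentiableAt ℝ (fderiv ℝ f) x :=
    ((hf.fderiv_right (m := 1) (by norm_num)).differentiable (by norm_num)).differentiableAt
  have second : ∀ v w : E3,
      fderiv ℝ (fun y => fderiv ℝ f y v) x w = fderiv ℝ (fderiv ℝ f) x w v := fun v w => by
    rw [fderiv_clm_apply hd (differentiableAt_const v)]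
    simp
  have hsymm : IsSymmSndFDerivAt ℝ f x := hf.contDiffAt.isSymmSndFDerivAt (by simp)
  exact (second _ _).trans ((hsymm.eq _ _).trans (second _ _).symm)

lemma apply_eq_sum_mul_apply_single (L : E3 →L[ℝ] ℝ) (v : E3) :
    L v = ∑ i, v i * L (EuclideanSpace.single i 1) := by
  have hv : v = ∑ i, v i • EuclideanSpace.single i (1 : ℝ) := by
    ext j
    simp [Pi.single_apply]
  conv_lhs => rw [hv, map_sum]
  simp only [map_smul, smul_eq_mul]

lemma opNorm_le_sum_abs_apply_single (L : E3 →L[ℝ] ℝ) :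
    ‖L‖ ≤ ∑ i, |L (EuclideanSpace.single i 1)| := by
  refine ContinuousLinearMap.opNorm_le_bound _ (by positivity) fun v => ?_
  rw [apply_eq_sum_mul_apply_single L v, Finset.sum_mul]
  refine (norm_sum_le _ _).trans (Finset.sum_le_sum fun i _ => ?_)
  rw [norm_mul, mul_comm]
  exact mul_le_mul_of_nonneg_left (PiLp.norm_apply_le v i) (norm_nonneg _)

lemma norm_fderiv_le_sum_abs_pd (f : E3 → ℝ) (x : E3) : ‖fderiv ℝ f x‖ ≤ ∑ i, |pd f i x| :=
  opNorm_le_sum_abs_apply_single _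

lemma eq_of_pd_eq_zero (hf : Differentiable ℝ f) (h : ∀ i x, pd f i x = 0) (x y : E3) :
    f x = f y := by
  refine is_const_of_fderiv_eq_zero (𝕜 := ℝ) hf (fun z => ?_) x y
  simpa [h] using norm_fderiv_le_sum_abs_pd f z

lemma integral_mul_pd_eq_neg (hf : ContDiff ℝ 1 f) (hc : HasCompactSupport f)
    (hg : ContDiff ℝ 1 g) (i : Fin 3) : ∫ x, f x * pd g i x = -∫ x, pd f i x * g x := by
  apply integral_mul_fderiv_eq_neg_fderiv_mul_of_integrable
  · exact ((continuous_pd hf i).mul hg.continuous).integrable_of_hasCompactSupport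
      (hasCompactSupport_pd hc i).mul_right
  · exact (hf.continuous.mul (continuous_pd hg i)).integrable_of_hasCompactSupport hc.mul_right
  · exact (hf.continuous.mul hg.continuous).integrable_of_hasCompactSupport hc.mul_right
  · exact fun x _ => (hf.differentiable one_ne_zero).differentiableAt
  · exact fun x _ => (hg.differentiable one_ne_zero).differentiableAt

end Calculus

lemma isTest_univ_iff {f : E3 → ℝ} : IsTest univ f ↔ ContDiff ℝ ∞ f ∧ HasCompactSupport f := by
  simp [IsTest]

namespace IsTest

variable {f g : E3 → ℝ}

lemma hasCompactSupport (hf : IsTest univ f) : HasCompactSupport f := hf.2.1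

lemma contDiff_two (hf : IsTest univ f) : ContDiff ℝ 2 f :=
  hf.1.of_le (WithTop.coe_le_coe.2 le_top)

lemma contDiff_one (hf : IsTest univ f) : ContDiff ℝ 1 f := hf.contDiff_two.of_le one_le_two

lemma differentiable (hf : IsTest univ f) : Differentiable ℝ f :=
  hf.contDiff_one.differentiable one_ne_zero

lemma continuous (hf : IsTest univ f) : Continuous f := hf.1.continuous

lemma memLp (hf : IsTest univ f) (p : ℝ≥0∞) : MemLp f p volume :=
  hf.continuous.memLp_of_hasCompactSupport hf.hasCompactSupport

lemma integrable (hf : IsTest univ f) : Integrable f volume :=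
  hf.continuous.integrable_of_hasCompactSupport hf.hasCompactSupport

lemma exists_bound (hf : IsTest univ f) : ∃ C, 0 ≤ C ∧ ∀ x, |f x| ≤ C := by
  obtain ⟨C, hC⟩ := hf.continuous.bounded_above_of_compact_support hf.hasCompactSupport
  exact ⟨C, (norm_nonneg _).trans (hC 0), hC⟩

lemma pd (hf : IsTest univ f) (i : Fin 3) : IsTest univ (pd f i) :=
  isTest_univ_iff.2 ⟨contDiff_pd hf.1 (by norm_num) i, hasCompactSupport_pd hf.hasCompactSupport i⟩

lemma add (hf : IsTest univ f) (hg : IsTest univ g) : IsTest univ (fun y => f y + g y) :=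
  isTest_univ_iff.2 ⟨hf.1.add hg.1, hf.hasCompactSupport.add hg.hasCompactSupport⟩

lemma const_mul (hf : IsTest univ f) (c : ℝ) : IsTest univ (fun y => c * f y) :=
  isTest_univ_iff.2 ⟨contDiff_const.mul hf.1, hf.hasCompactSupport.mul_left⟩

lemma zero : IsTest univ (fun _ => (0 : ℝ)) :=
  isTest_univ_iff.2 ⟨contDiff_const, HasCompactSupport.zero⟩

lemma sum {κ : Type*} (s : Finset κ) {f : κ → E3 → ℝ} (hf : ∀ k, IsTest univ (f k)) :
    IsTest univ (fun y => ∑ k ∈ s, f k y) := by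
  classical
  induction s using Finset.induction_on with
  | empty => simpa only [Finset.sum_empty] using zero
  | insert k s hk ih => simpa only [Finset.sum_insert hk] using (hf k).add ih

lemma comp_sub_right (hf : IsTest univ f) (a : E3) : IsTest univ (fun y => f (y - a)) :=
  isTest_univ_iff.2 ⟨hf.1.comp (contDiff_id.sub contDiff_const),
    hf.hasCompactSupport.comp_homeomorph (Homeomorph.subRight a)⟩

lemma comp_sub_left (hf : IsTest univ f) (a : E3) : IsTest univ (fun y => f (a - y)) :=
  isTest_univ_iff.2 ⟨hf.1.comp (contDiff_const.sub contDiff_id),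
    hf.hasCompactSupport.comp_homeomorph (Homeomorph.subLeft a)⟩

lemma comp_smul (hf : IsTest univ f) {c : ℝ} (hc : c ≠ 0) : IsTest univ (fun y => f (c • y)) :=
  isTest_univ_iff.2 ⟨hf.1.comp (contDiff_const_smul c),
    hf.hasCompactSupport.comp_homeomorph (Homeomorph.smulOfNeZero c hc)⟩

lemma exists_pd_bound (hf : IsTest univ f) : ∃ C, 0 ≤ C ∧ ∀ i x, |_root_.pd f i x| ≤ C := by
  choose C hC0 hC using fun i => (hf.pd i).exists_bound
  exact ⟨∑ i, C i, Finset.sum_nonneg fun i _ => hC0 i, fun i x =>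
    (hC i x).trans (Finset.single_le_sum (fun j _ => hC0 j) (Finset.mem_univ i))⟩

lemma integral_pd_mul_pd_comm (hf : IsTest univ f) (hg : IsTest univ g) (i j : Fin 3) :
    ∫ x, _root_.pd f i x * _root_.pd g j x = ∫ x, _root_.pd f j x * _root_.pd g i x := by
  rw [integral_mul_pd_eq_neg (hf.pd i).contDiff_one (hf.pd i).hasCompactSupport hg.contDiff_one,
    integral_mul_pd_eq_neg (hf.pd j).contDiff_one (hf.pd j).hasCompactSupport hg.contDiff_one,
    pd_comm hf.contDiff_two]

end IsTest

lemma sum_integral_pd_mul_pd_swap {w : Fin 3 → E3 → ℝ} (hw : ∀ i, IsTest univ (w i)) :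
    ∑ i, ∑ j, ∫ x, pd (w i) j x * pd (w j) i x = ∫ x, (∑ i, pd (w i) i x) ^ 2 := by
  have hint : ∀ i j, Integrable (fun x => pd (w i) i x * pd (w j) j x) volume := fun i j =>
    integrable_mul_of_memLp (((hw i).pd i).memLp 2) (((hw j).pd j).memLp 2)
  have hswap : ∀ i j, ∫ x, pd (w i) j x * pd (w j) i x = ∫ x, pd (w i) i x * pd (w j) j x :=
    fun i j => (hw i).integral_pd_mul_pd_comm (hw j) j i
  simp only [hswap, pow_two, Finset.sum_mul_sum, integral_finsetSum_finsetSum _ _ hint]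

section Laplacian

variable {f g : E3 → ℝ}

/-- The Laplacian of a scalar function, written with the partial derivatives `pd` in which the
weak formulation is expressed. -/
def laplacian (f : E3 → ℝ) (x : E3) : ℝ := ∑ i, pd (pd f i) i x

lemma IsTest.laplacian (hf : IsTest univ f) : IsTest univ (laplacian f) :=
  IsTest.sum Finset.univ fun i => (hf.pd i).pd i

lemma laplacian_fun_add (hf : IsTest univ f) (hg : IsTest univ g) :
    laplacian (fun y => f y + g y) = fun x => laplacian f x + laplacian g x := by
  funext x
  simp only [laplacian, pd_fun_add hf.differentiable hg.differentiable,
    pd_fun_add (hf.pd _).differentiable (hg.pd _).differentiable, Finset.sum_add_distrib]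

lemma laplacian_const_mul (hf : IsTest univ f) (c : ℝ) :
    laplacian (fun y => c * f y) = fun x => c * laplacian f x := by
  funext x
  simp only [laplacian, pd_const_mul hf.differentiable, pd_const_mul (hf.pd _).differentiable,
    Finset.mul_sum]

lemma laplacian_zero : laplacian (fun _ => (0 : ℝ)) = fun _ => 0 := by
  simpa using laplacian_const_mul IsTest.zero 0

lemma laplacian_comp_sub_left (hf : IsTest univ f) (a x : E3) :
    laplacian (fun y => f (a - y)) x = laplacian f (a - x) := by
  refine Finset.sum_congr rfl fun i _ => ?_
  have hneg : (fun y => -pd f i (a - y)) = fun y => (-1) * pd f i (a - y) := by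
    simp only [neg_one_mul]
  rw [pd_comp_sub_left, hneg, pd_const_mul ((hf.pd i).comp_sub_left a).differentiable,
    pd_comp_sub_left]
  simp

lemma sum_integral_sq_pd_pd (hf : IsTest univ f) :
    ∑ i, ∑ j, ∫ x, pd (pd f i) j x ^ 2 = ∫ x, laplacian f x ^ 2 := by
  have hsquare : ∀ i j x, pd (pd f i) j x ^ 2 = pd (pd f i) j x * pd (pd f j) i x :=
    fun i j x => by rw [pow_two, pd_comm hf.contDiff_two j i]
  simp only [hsquare]
  exact sum_integral_pd_mul_pd_swap fun i => hf.pd i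

lemma lpNorm_pd_pd_le_lpNorm_laplacian (hf : IsTest univ f) (i j : Fin 3) :
    lpNorm (pd (pd f i) j) 2 volume ≤ lpNorm (laplacian f) 2 volume := by
  have hnonneg : ∀ i j, 0 ≤ ∫ x, pd (pd f i) j x ^ 2 := fun i j =>
    integral_nonneg fun x => sq_nonneg _
  refine le_of_sq_le_sq ?_ lpNorm_nonneg
  rw [lpNorm_two_sq_eq_integral (((hf.pd i).pd j).memLp 2),
    lpNorm_two_sq_eq_integral (hf.laplacian.memLp 2), ← sum_integral_sq_pd_pd hf]
  exact (Finset.single_le_sum (fun l _ => hnonneg i l) (Finset.mem_univ j)).trans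
    (Finset.single_le_sum (f := fun k => ∑ l, ∫ x, pd (pd f k) l x ^ 2)
      (fun k _ => Finset.sum_nonneg fun l _ => hnonneg k l) (Finset.mem_univ i))

end Laplacian

lemma exists_sobolev_const : ∃ C : ℝ, 0 ≤ C ∧ ∀ f : E3 → ℝ, IsTest univ f →
    lpNorm f 6 volume ≤ C * ∑ i, lpNorm (pd f i) 2 volume := by
  refine ⟨SNormLESNormFDerivOfEqConst ℝ (volume : Measure E3) 2, NNReal.coe_nonneg _,
    fun f hf => ?_⟩
  have hpd : ∀ i, MemLp (fun x => |pd f i x|) 2 volume := fun i => ((hf.pd i).memLp 2).abs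
  have hsum : MemLp (fun x => ∑ i, |pd f i x|) 2 volume := memLp_finsetSum _ fun i _ => hpd i
  have sobolev := eLpNorm_le_eLpNorm_fderiv_of_eq (μ := (volume : Measure E3)) hf.contDiff_one
    hf.hasCompactSupport (p := 2) (p' := 6) (by norm_num) (by simp) (by simp; norm_num)
  have bound : eLpNorm f 6 volume ≤ SNormLESNormFDerivOfEqConst ℝ (volume : Measure E3) 2 *
      eLpNorm (fun x => ∑ i, |pd f i x|) 2 volume :=
    sobolev.trans (mul_le_mul_right (eLpNorm_mono fun x =>
      (norm_fderiv_le_sum_abs_pd f x).trans (le_abs_self _)) _)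
  have bound' := ENNReal.toReal_mono (ENNReal.mul_ne_top ENNReal.coe_ne_top hsum.2.ne) bound
  rw [ENNReal.toReal_mul, toReal_eLpNorm (hf.memLp 6).1, toReal_eLpNorm hsum.1] at bound'
  refine bound'.trans (mul_le_mul_of_nonneg_left ?_ (NNReal.coe_nonneg _))
  refine (lpNorm_fun_sum_le (by norm_num) _ hpd).trans (le_of_eq ?_)
  exact Finset.sum_congr rfl fun i _ => lpNorm_fun_abs (hf.pd i).continuous.aestronglyMeasurable _

section Mollification

variable {k f g : E3 → ℝ}

/-- The convolution of two scalar functions on `ℝ³`; the first one plays the role of the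
regularising kernel. -/
def mollify (k f : E3 → ℝ) : E3 → ℝ := k ⋆[ContinuousLinearMap.lsmul ℝ ℝ, volume] f

lemma mollify_apply (k f : E3 → ℝ) (x : E3) : mollify k f x = ∫ y, k (x - y) * f y :=
  convolution_eq_swap _

lemma contDiff_mollify (hk : IsTest univ k) (hf : LocallyIntegrable f volume) :
    ContDiff ℝ 1 (mollify k f) :=
  hk.hasCompactSupport.contDiff_convolution_left _ hk.contDiff_one hf

lemma contDiff_two_mollify (hk : IsTest univ k) (hf : LocallyIntegrable f volume) :
    ContDiff ℝ 2 (mollify k f) :=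
  hk.hasCompactSupport.contDiff_convolution_left _ hk.contDiff_two hf

lemma integrable_kernel_mul (hk : IsTest univ k) (hf : LocallyIntegrable f volume) (x : E3) :
    Integrable (fun y => k (x - y) * f y) volume :=
  (hk.hasCompactSupport.convolutionExists_left (ContinuousLinearMap.lsmul ℝ ℝ) hk.continuous
    hf x).integrable_swap

lemma pd_mollify (hk : IsTest univ k) (hf : LocallyIntegrable f volume) (i : Fin 3) :
    pd (mollify k f) i = mollify (pd k i) f := by
  funext x
  have hderiv := hk.hasCompactSupport.hasFDerivAt_convolution_left
    (ContinuousLinearMap.lsmul ℝ ℝ) hk.contDiff_one hf x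
  have hint := ((hk.hasCompactSupport.fderiv ℝ).convolutionExists_left
    ((ContinuousLinearMap.lsmul ℝ ℝ).precompL E3)
    (hk.contDiff_one.continuous_fderiv one_ne_zero) hf x).integrable_swap
  rw [pd, mollify, hderiv.fderiv, convolution_eq_swap, ContinuousLinearMap.integral_apply hint,
    mollify_apply]
  rfl

lemma integrable_mollify (hk : Integrable k volume) (hf : Integrable f volume) :
    Integrable (mollify k f) volume :=
  hk.integrable_convolution _ hf

lemma exists_abs_mollify_le (hk : IsTest univ k) (hf : Integrable f volume) :
    ∃ C, 0 ≤ C ∧ ∀ x, |mollify k f x| ≤ C := by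
  obtain ⟨C, hC0, hC⟩ := hk.exists_bound
  refine ⟨∫ y, C * |f y|, integral_nonneg fun y => by positivity, fun x => ?_⟩
  rw [mollify_apply]
  refine abs_integral_le_integral_abs.trans (integral_mono
    (integrable_kernel_mul hk hf.locallyIntegrable x).abs (hf.abs.const_mul C) fun y => ?_)
  rw [abs_mul]
  exact mul_le_mul_of_nonneg_right (hC _) (abs_nonneg _)

lemma memLp_two_mollify_of_integrable (hk : IsTest univ k) (hf : Integrable f volume) :
    MemLp (mollify k f) 2 volume := by
  obtain ⟨C, -, hC⟩ := exists_abs_mollify_le hk hf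
  have hcont := (contDiff_mollify hk hf.locallyIntegrable).continuous
  rw [memLp_two_iff_integrable_sq hcont.aestronglyMeasurable]
  refine ((integrable_mollify hk.integrable hf).abs.const_mul C).mono'
    (hcont.pow 2).aestronglyMeasurable (Eventually.of_forall fun x => ?_)
  rw [Real.norm_eq_abs, abs_pow, pow_two]
  exact mul_le_mul_of_nonneg_right (hC x) (abs_nonneg _)

lemma sq_mollify_le (hk : IsTest univ k) (hk0 : ∀ x, 0 ≤ k x) (hk1 : ∫ x, k x = 1)
    (hg : LocallyIntegrable g volume) (hg2 : LocallyIntegrable (fun x => g x ^ 2) volume) (x : E3) :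
    mollify k g x ^ 2 ≤ mollify k (fun y => g y ^ 2) x := by
  set c := mollify k g x with hc
  have hkint : Integrable (fun y => k (x - y)) volume := hk.integrable.comp_sub_left x
  have hmass : ∫ y, k (x - y) = 1 := by rw [integral_sub_left_eq_self, hk1]
  have hlin := integrable_kernel_mul hk hg x
  have hsq := integrable_kernel_mul hk hg2 x
  have variance : ∫ y, k (x - y) * (g y - c) ^ 2 = mollify k (fun y => g y ^ 2) x - c ^ 2 := by
    have expand : ∀ y, k (x - y) * (g y - c) ^ 2 =
        k (x - y) * g y ^ 2 - 2 * c * (k (x - y) * g y) + c ^ 2 * k (x - y) := fun y => by ring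
    have hdiff : Integrable (fun y => k (x - y) * g y ^ 2 - 2 * c * (k (x - y) * g y)) volume :=
      hsq.sub (hlin.const_mul _)
    simp_rw [expand]
    rw [integral_add hdiff (hkint.const_mul _),
      integral_sub hsq (hlin.const_mul _), integral_const_mul, integral_const_mul, hmass,
      ← mollify_apply k g, ← mollify_apply k fun y => g y ^ 2, ← hc]
    ring
  have hnonneg : 0 ≤ ∫ y, k (x - y) * (g y - c) ^ 2 :=
    integral_nonneg fun y => mul_nonneg (hk0 _) (sq_nonneg _)
  linarith

lemma memLp_two_mollify (hk : IsTest univ k) (hk0 : ∀ x, 0 ≤ k x) (hk1 : ∫ x, k x = 1)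
    (hg : MemLp g 2 volume) : MemLp (mollify k g) 2 volume := by
  have hloc : LocallyIntegrable g volume := hg.locallyIntegrable (by norm_num)
  have hcont := (contDiff_mollify hk hloc).continuous
  rw [memLp_two_iff_integrable_sq hcont.aestronglyMeasurable]
  refine (integrable_mollify hk.integrable hg.integrable_sq).mono'
    (hcont.pow 2).aestronglyMeasurable (Eventually.of_forall fun x => ?_)
  rw [Real.norm_of_nonneg (sq_nonneg _)]
  exact sq_mollify_le hk hk0 hk1 hloc hg.integrable_sq.locallyIntegrable x

lemma integrable_prod_kernel_mul {p q : ℝ≥0∞} [p.HolderConjugate q] (hk : Integrable k volume)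
    (hf : MemLp f p volume) (hg : MemLp g q volume) :
    Integrable (fun z : E3 × E3 => k z.2 * (f z.1 * g (z.1 - z.2))) (volume.prod volume) := by
  have hmeas : AEStronglyMeasurable (fun z : E3 × E3 => k z.2 * (f z.1 * g (z.1 - z.2)))
      (volume.prod volume) :=
    hk.1.comp_snd.mul (hf.1.comp_fst.mul
      (hg.1.comp_quasiMeasurePreserving (quasiMeasurePreserving_sub volume volume)))
  have hfg : ∀ h, Integrable (fun x => f x * g (x - h)) volume := fun h =>
    integrable_mul_of_memLp hf (memLp_comp_sub_right hg h)
  refine (integrable_prod_iff' hmeas).2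
    ⟨Eventually.of_forall fun h => (hfg h).const_mul (k h), ?_⟩
  refine (hk.norm.mul_const (lpNorm f p volume * lpNorm g q volume)).mono'
    hmeas.norm.prod_swap.integral_prod_right' (Eventually.of_forall fun h => ?_)
  simp only [norm_mul, integral_const_mul]
  rw [norm_norm, Real.norm_of_nonneg (integral_nonneg fun x => by positivity)]
  refine mul_le_mul_of_nonneg_left ?_ (norm_nonneg _)
  rw [← lpNorm_comp_sub_right hg.1 h, ← lpNorm_norm (hf.1),
    ← lpNorm_norm (memLp_comp_sub_right hg h).1]
  exact (le_abs_self _).trans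
    (abs_integral_mul_le_lpNorm_mul hf.norm (memLp_comp_sub_right hg h).norm)

section Fubini

variable {p q : ℝ≥0∞} [p.HolderConjugate q]

lemma integrable_kernel_mul_integral (hk : Integrable k volume) (hf : MemLp f p volume)
    (hg : MemLp g q volume) : Integrable (fun h => k h * ∫ x, f x * g (x - h)) volume := by
  simpa only [integral_const_mul] using (integrable_prod_kernel_mul hk hf hg).integral_prod_right

lemma integral_mul_kernel_eq_mul_mollify (k f g : E3 → ℝ) (x : E3) :
    ∫ h, k h * (f x * g (x - h)) = f x * mollify k g x := by
  rw [mollify, convolution_def, ← integral_const_mul]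
  simp only [ContinuousLinearMap.lsmul_apply, smul_eq_mul, mul_left_comm]

lemma integrable_mul_mollify (hk : Integrable k volume) (hf : MemLp f p volume)
    (hg : MemLp g q volume) : Integrable (fun x => f x * mollify k g x) volume := by
  simpa only [integral_mul_kernel_eq_mul_mollify] using
    (integrable_prod_kernel_mul hk hf hg).integral_prod_left

lemma integral_mul_mollify (hk : Integrable k volume) (hf : MemLp f p volume)
    (hg : MemLp g q volume) :
    ∫ x, f x * mollify k g x = ∫ h, k h * ∫ x, f x * g (x - h) := by
  have swap := integral_integral_swap (f := fun x h => k h * (f x * g (x - h)))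
    (integrable_prod_kernel_mul hk hf hg)
  simpa only [integral_const_mul, integral_mul_kernel_eq_mul_mollify] using swap

end Fubini

end Mollification

section Mollifiers

lemma tendsto_const_div_natCast_add_one (C : ℝ) :
    Tendsto (fun n : ℕ => C / ((n : ℝ) + 1)) atTop (𝓝 0) := by
  simpa [div_eq_mul_inv] using (tendsto_one_div_add_atTop_nhds_zero_nat (𝕜 := ℝ)).const_mul C

/-- A smooth bump equal to `1` on the ball of radius `1 / (n + 1)` and supported in the ball of
twice that radius. -/
def bump (n : ℕ) : ContDiffBump (0 : E3) where
  rIn := 1 / ((n : ℝ) + 1)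
  rOut := 2 / ((n : ℝ) + 1)
  rIn_pos := by positivity
  rIn_lt_rOut := by gcongr; norm_num

lemma isTest_bump (n : ℕ) : IsTest univ (bump n) :=
  isTest_univ_iff.2 ⟨(bump n).contDiff, (bump n).hasCompactSupport⟩

lemma bump_eq_bump_zero_smul (n : ℕ) (x : E3) : bump n x = bump 0 (((n : ℝ) + 1) • x) := by
  have ratio : ∀ m : ℕ, (bump m).rOut / (bump m).rIn = 2 := fun m => by
    simp only [bump]
    field_simp
  simp only [ContDiffBump.apply, ratio, sub_zero]
  simp [bump]

/-- The standard mollifiers on `ℝ³`: `mollifier n` is smooth, nonnegative, even, of mass one and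
supported in the ball of radius `2 / (n + 1)`. -/
def mollifier (n : ℕ) : E3 → ℝ := (bump n).normed volume

lemma isTest_mollifier (n : ℕ) : IsTest univ (mollifier n) :=
  isTest_univ_iff.2 ⟨(bump n).contDiff_normed, (bump n).hasCompactSupport_normed⟩

lemma mollifier_nonneg (n : ℕ) (x : E3) : 0 ≤ mollifier n x := (bump n).nonneg_normed x

lemma integral_mollifier (n : ℕ) : ∫ x, mollifier n x = 1 := (bump n).integral_normed

lemma pd_mollifier_eq_zero {n : ℕ} {h : E3} (hh : 2 / ((n : ℝ) + 1) < ‖h‖) (i : Fin 3) :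
    pd (mollifier n) i h = 0 := by
  have hmem : h ∉ tsupport (mollifier n) := by
    rw [mollifier, (bump n).tsupport_normed_eq, mem_closedBall_zero_iff, not_le]
    exact hh
  rw [pd, fderiv_of_notMem_tsupport (𝕜 := ℝ) hmem, zero_apply]

lemma mollifier_eq_mollifier_zero_smul (n : ℕ) (x : E3) :
    mollifier n x = ((n : ℝ) + 1) ^ 3 * mollifier 0 (((n : ℝ) + 1) • x) := by
  have hmass : ∫ y, bump n y = (((n : ℝ) + 1) ^ 3)⁻¹ * ∫ y, bump 0 y := by
    simp_rw [bump_eq_bump_zero_smul n]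
    rw [Measure.integral_comp_smul_of_nonneg volume (bump 0) ((n : ℝ) + 1) (hR := by positivity)]
    simp
  rw [mollifier, mollifier, ContDiffBump.normed_def, ContDiffBump.normed_def, hmass,
    bump_eq_bump_zero_smul n]
  field_simp

lemma integral_norm_mul_abs_pd_mollifier (n : ℕ) (i : Fin 3) :
    ∫ h, ‖h‖ * |pd (mollifier n) i h| = ∫ h, ‖h‖ * |pd (mollifier 0) i h| := by
  set N : ℝ := (n : ℝ) + 1
  have hN0 : 0 < N := by positivity
  have hpd : pd (mollifier n) i = fun h => N ^ 3 * (N * pd (mollifier 0) i (N • h)) := by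
    rw [funext (mollifier_eq_mollifier_zero_smul n), pd_const_mul
      ((isTest_mollifier 0).comp_smul hN0.ne').differentiable, pd_comp_smul]
  have scale : ∀ h : E3, ‖h‖ * |pd (mollifier n) i h| =
      N ^ 3 * (‖N • h‖ * |pd (mollifier 0) i (N • h)|) := fun h => by
    rw [hpd, abs_mul, abs_mul, abs_of_pos hN0, abs_of_pos (by positivity : 0 < N ^ 3), norm_smul,
      Real.norm_of_nonneg hN0.le]
    ring
  simp_rw [scale]
  rw [integral_const_mul, Measure.integral_comp_smul_of_nonneg volume
    (fun h => ‖h‖ * |pd (mollifier 0) i h|) N (hR := hN0.le), finrank_euclideanSpace_fin,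
    smul_eq_mul, mul_inv_cancel_left₀ (by positivity)]

lemma integral_pd_mollifier_mul_apply (n : ℕ) (i j : Fin 3) :
    ∫ h, pd (mollifier n) i h * h j = if i = j then -1 else 0 := by
  let coord : E3 →L[ℝ] ℝ := EuclideanSpace.proj j
  have hcoord : ∀ x, pd coord i x = if i = j then 1 else 0 := fun x => by
    rw [pd, ContinuousLinearMap.fderiv]
    simp [coord, eq_comm]
  have parts := integral_mul_pd_eq_neg (isTest_mollifier n).contDiff_one
    (isTest_mollifier n).hasCompactSupport coord.contDiff i
  rw [eq_neg_iff_add_eq_zero, add_comm, ← eq_neg_iff_add_eq_zero] at parts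
  refine parts.trans ?_
  simp only [hcoord]
  split_ifs <;> simp [integral_mollifier]

lemma ae_tendsto_mollify_mollifier {f : E3 → ℝ} (hf : LocallyIntegrable f volume) :
    ∀ᵐ x, Tendsto (fun n => mollify (mollifier n) f x) atTop (𝓝 (f x)) :=
  ContDiffBump.ae_convolution_tendsto_right_of_locallyIntegrable (φ := bump) (K := 2)
    (tendsto_const_div_natCast_add_one 2)
    (Eventually.of_forall fun n => by simp only [bump]; exact le_of_eq (by ring)) hf

end Mollifiers

section Cutoff

/-- Smooth cutoffs exhausting `ℝ³`: `cutoff n` equals `1` on the ball of radius `n + 1` and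
vanishes outside the ball of twice that radius. -/
def cutoff (n : ℕ) (x : E3) : ℝ := bump 0 ((1 / ((n : ℝ) + 1)) • x)

lemma isTest_cutoff (n : ℕ) : IsTest univ (cutoff n) :=
  (isTest_bump 0).comp_smul (by positivity)

lemma cutoff_nonneg (n : ℕ) (x : E3) : 0 ≤ cutoff n x := (bump 0).nonneg

lemma cutoff_le_one (n : ℕ) (x : E3) : cutoff n x ≤ 1 := (bump 0).le_one

lemma abs_cutoff_le_one (n : ℕ) (x : E3) : |cutoff n x| ≤ 1 := by
  rw [abs_of_nonneg (cutoff_nonneg n x)]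
  exact cutoff_le_one n x

lemma cutoff_eq_one {n : ℕ} {x : E3} (hx : ‖x‖ ≤ (n : ℝ) + 1) : cutoff n x = 1 := by
  apply (bump 0).one_of_mem_closedBall
  rw [mem_closedBall_zero_iff, norm_smul, Real.norm_of_nonneg (by positivity),
    one_div_mul_eq_div, div_le_iff₀ (by positivity)]
  simpa [bump] using hx

lemma cutoff_eq_zero {n : ℕ} {x : E3} (hx : 2 * ((n : ℝ) + 1) ≤ ‖x‖) : cutoff n x = 0 := by
  apply (bump 0).zero_of_le_dist
  rw [dist_zero_right, norm_smul, Real.norm_of_nonneg (by positivity), one_div_mul_eq_div,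
    le_div_iff₀ (by positivity)]
  simpa [bump] using hx

lemma eventually_cutoff_eq_one (x : E3) : ∀ᶠ n in atTop, cutoff n x = 1 := by
  obtain ⟨N, hN⟩ := exists_nat_ge ‖x‖
  filter_upwards [eventually_ge_atTop N] with n hn
  have : (N : ℝ) ≤ n := by exact_mod_cast hn
  exact cutoff_eq_one (by linarith)

lemma cutoff_le_cutoff {m n : ℕ} (hmn : 2 * m + 1 ≤ n) (x : E3) : cutoff m x ≤ cutoff n x := by
  rcases le_total ‖x‖ ((n : ℝ) + 1) with hx | hx
  · rw [cutoff_eq_one hx]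
    exact cutoff_le_one m x
  · have : ((2 * m + 1 : ℕ) : ℝ) ≤ n := by exact_mod_cast hmn
    push_cast at this
    rw [cutoff_eq_zero (by linarith)]
    exact cutoff_nonneg n x

lemma pd_cutoff (n : ℕ) (i : Fin 3) :
    pd (cutoff n) i = fun x => (1 / ((n : ℝ) + 1)) * pd (bump 0) i ((1 / ((n : ℝ) + 1)) • x) :=
  pd_comp_smul _ _ _

lemma exists_abs_pd_cutoff_le :
    ∃ C : ℝ, 0 ≤ C ∧ ∀ n i x, |pd (cutoff n) i x| ≤ C / ((n : ℝ) + 1) := by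
  obtain ⟨C, hC0, hC⟩ := (isTest_bump 0).exists_pd_bound
  refine ⟨C, hC0, fun n i x => ?_⟩
  rw [pd_cutoff, abs_mul, abs_of_nonneg (by positivity), one_div_mul_eq_div]
  gcongr
  exact hC i _

lemma laplacian_cutoff (n : ℕ) (x : E3) : laplacian (cutoff n) x =
    1 / ((n : ℝ) + 1) * (1 / ((n : ℝ) + 1) * laplacian (bump 0) ((1 / ((n : ℝ) + 1)) • x)) := by
  have hc : 1 / ((n : ℝ) + 1) ≠ 0 := by positivity
  simp only [laplacian, pd_cutoff, pd_comp_smul, Finset.mul_sum,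
    pd_const_mul (((isTest_bump 0).pd _).comp_smul hc).differentiable]

lemma exists_abs_laplacian_cutoff_le :
    ∃ C : ℝ, 0 ≤ C ∧ ∀ n x, |laplacian (cutoff n) x| ≤ C / ((n : ℝ) + 1) := by
  obtain ⟨C, hC0, hC⟩ := (isTest_bump 0).laplacian.exists_bound
  refine ⟨C, hC0, fun n x => ?_⟩
  have hle : 1 / ((n : ℝ) + 1) ≤ 1 := by
    rw [div_le_one (by positivity)]
    linarith [Nat.cast_nonneg (α := ℝ) n]
  rw [laplacian_cutoff, abs_mul, abs_of_nonneg (by positivity), one_div_mul_eq_div, abs_mul,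
    abs_of_nonneg (by positivity)]
  gcongr
  exact (mul_le_of_le_one_left (abs_nonneg _) hle).trans (hC _)

end Cutoff

section Harmonic

lemma integral_mul_laplacian {f w : E3 → ℝ} (hf : IsTest univ f) (hw : ContDiff ℝ 2 w) :
    ∫ x, f x * laplacian w x = ∫ x, laplacian f x * w x := by
  have hpd : ∀ i, ContDiff ℝ 1 (pd w i) := fun i => contDiff_pd hw (by norm_num) i
  have hleft : ∀ i, Integrable (fun x => f x * pd (pd w i) i x) volume := fun i =>
    (hf.continuous.mul (continuous_pd (hpd i) i)).integrable_of_hasCompactSupport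
      hf.hasCompactSupport.mul_right
  have hright : ∀ i, Integrable (fun x => pd (pd f i) i x * w x) volume := fun i =>
    (((hf.pd i).pd i).continuous.mul hw.continuous).integrable_of_hasCompactSupport
      ((hf.pd i).pd i).hasCompactSupport.mul_right
  simp only [laplacian, Finset.mul_sum, Finset.sum_mul]
  rw [integral_finsetSum _ fun i _ => hleft i, integral_finsetSum _ fun i _ => hright i]
  refine Finset.sum_congr rfl fun i _ => ?_
  rw [integral_mul_pd_eq_neg hf.contDiff_one hf.hasCompactSupport (hpd i),
    integral_mul_pd_eq_neg (hf.pd i).contDiff_one (hf.pd i).hasCompactSupport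
      (hw.of_le one_le_two), neg_neg]

lemma laplacian_mul_self {v : E3 → ℝ} (hv : ContDiff ℝ 2 v) (x : E3) :
    laplacian (fun y => v y * v y) x = 2 * (v x * laplacian v x + ∑ i, pd v i x ^ 2) := by
  have hd : Differentiable ℝ v := hv.differentiable two_ne_zero
  have hdpd : ∀ i, Differentiable ℝ (pd v i) := fun i =>
    (contDiff_pd (m := 1) hv (by norm_num) i).differentiable one_ne_zero
  simp only [laplacian, Finset.mul_sum, ← Finset.sum_add_distrib]
  refine Finset.sum_congr rfl fun i _ => ?_
  have hpd : pd (fun y => v y * v y) i = fun y => 2 * (v y * pd v i y) := by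
    rw [pd_fun_mul hd hd]
    funext y
    ring
  have hmul : Differentiable ℝ (fun y => v y * pd v i y) := hd.mul (hdpd i)
  rw [hpd, pd_const_mul hmul, pd_fun_mul hd (hdpd i)]
  ring

lemma eq_zero_of_tendsto_integral_cutoff_mul {F : E3 → ℝ} (hF : Continuous F)
    (hF0 : ∀ x, 0 ≤ F x) {a : ℕ → ℝ} (ha : Tendsto a atTop (𝓝 0))
    (hle : ∀ n, ∫ x, cutoff n x * F x ≤ a n) (x : E3) : F x = 0 := by
  have hcont : ∀ n, Continuous fun y => cutoff n y * F y := fun n =>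
    (isTest_cutoff n).continuous.mul hF
  have hsupp : ∀ n, HasCompactSupport fun y => cutoff n y * F y := fun n =>
    (isTest_cutoff n).hasCompactSupport.mul_right
  have hint : ∀ n, Integrable (fun y => cutoff n y * F y) volume := fun n =>
    (hcont n).integrable_of_hasCompactSupport (hsupp n)
  have hnonpos : ∀ m, ∫ y, cutoff m y * F y ≤ 0 := fun m => by
    refine ge_of_tendsto ha ?_
    filter_upwards [eventually_ge_atTop (2 * m + 1)] with n hn
    exact (integral_mono (hint m) (hint n) fun y =>
      mul_le_mul_of_nonneg_right (cutoff_le_cutoff hn y) (hF0 y)).trans (hle n)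
  by_contra hne
  obtain ⟨m, hm⟩ := (eventually_cutoff_eq_one x).exists
  have hpos : 0 < ∫ y, cutoff m y * F y :=
    (hcont m).integral_pos_of_hasCompactSupport_nonneg_nonzero (hsupp m)
      (fun y => mul_nonneg (cutoff_nonneg m y) (hF0 y)) (x := x) (by simp [hm, hne])
  exact (hnonpos m).not_gt hpos

lemma pd_eq_zero_of_laplacian_eq_zero_of_memLp {v : E3 → ℝ} (hv : ContDiff ℝ 2 v)
    (hv2 : MemLp v 2 volume) (hharm : ∀ x, laplacian v x = 0) (i : Fin 3) (x : E3) :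
    pd v i x = 0 := by
  obtain ⟨C, -, hC⟩ := exists_abs_laplacian_cutoff_le
  have hw : Integrable (fun y => v y * v y) volume := integrable_mul_of_memLp hv2 hv2
  have hgrad : ∀ n, ∫ y, cutoff n y * (2 * ∑ i, pd v i y ^ 2) =
      ∫ y, laplacian (cutoff n) y * (v y * v y) := fun n => by
    rw [← integral_mul_laplacian (isTest_cutoff n) (hv.mul hv)]
    simp only [laplacian_mul_self hv, hharm, mul_zero, zero_add]
  have hle : ∀ n, ∫ y, cutoff n y * (2 * ∑ i, pd v i y ^ 2) ≤
      (C * ∫ y, |v y * v y|) / ((n : ℝ) + 1) := fun n => by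
    rw [hgrad, mul_div_right_comm, ← integral_const_mul]
    refine (le_abs_self _).trans (abs_integral_le_integral_abs.trans ?_)
    refine integral_mono_of_nonneg (Eventually.of_forall fun _ => abs_nonneg _)
      (hw.abs.const_mul _) (Eventually.of_forall fun y => ?_)
    simp only [abs_mul (laplacian _ y)]
    exact mul_le_mul_of_nonneg_right (hC n y) (abs_nonneg _)
  have hzero := eq_zero_of_tendsto_integral_cutoff_mul
    (continuous_const.mul (continuous_finsetSum _ fun i _ =>
      (continuous_pd (hv.of_le one_le_two) i).pow 2))
    (fun y => mul_nonneg two_pos.le (Finset.sum_nonneg fun i _ => sq_nonneg _))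
    (tendsto_const_div_natCast_add_one _) hle x
  simpa using (Finset.sum_eq_zero_iff_of_nonneg fun i _ => sq_nonneg (pd v i x)).1
    ((mul_eq_zero.1 hzero).resolve_left two_ne_zero) i (Finset.mem_univ i)

lemma eq_zero_of_laplacian_eq_zero_of_memLp {v : E3 → ℝ} (hv : ContDiff ℝ 2 v)
    (hv2 : MemLp v 2 volume) (hharm : ∀ x, laplacian v x = 0) (x : E3) : v x = 0 := by
  have hconst : v = fun _ => v x := funext fun y =>
    eq_of_pd_eq_zero (hv.differentiable two_ne_zero)
      (pd_eq_zero_of_laplacian_eq_zero_of_memLp hv hv2 hharm) y x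
  rw [hconst, memLp_const_iff (by norm_num) (by norm_num)] at hv2
  simpa using hv2

lemma laplacian_mollify {k f : E3 → ℝ} (hk : IsTest univ k) (hf : LocallyIntegrable f volume) :
    laplacian (mollify k f) = mollify (laplacian k) f := by
  funext x
  simp only [laplacian, pd_mollify hk hf, pd_mollify (hk.pd _) hf, mollify_apply, Finset.sum_mul]
  exact (integral_finsetSum _ fun i _ => integrable_kernel_mul ((hk.pd i).pd i) hf x).symm

lemma ae_eq_zero_of_integral_mul_laplacian_eq_zero {g : E3 → ℝ} (hg : MemLp g 2 volume)
    (h : ∀ ψ, IsTest univ ψ → ∫ x, g x * laplacian ψ x = 0) : g =ᵐ[volume] 0 := by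
  have hloc : LocallyIntegrable g volume := hg.locallyIntegrable (by norm_num)
  have hzero : ∀ n x, mollify (mollifier n) g x = 0 := fun n => by
    have hk := isTest_mollifier n
    refine eq_zero_of_laplacian_eq_zero_of_memLp (contDiff_two_mollify hk hloc)
      (memLp_two_mollify hk (mollifier_nonneg n) (integral_mollifier n) hg) fun x => ?_
    rw [laplacian_mollify hk hloc, mollify_apply, ← h _ (hk.comp_sub_left x)]
    simp only [laplacian_comp_sub_left hk, mul_comm]
  filter_upwards [ae_tendsto_mollify_mollifier hloc] with x hx
  simp only [hzero] at hx
  exact tendsto_nhds_unique hx tendsto_const_nhds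

end Harmonic

section Duality

/-- The subspace of `L²(ℝ³)` formed by the Laplacians of test functions. -/
def laplacianRange : Submodule ℝ (Lp ℝ 2 (volume : Measure E3)) where
  carrier := {f | ∃ ψ, IsTest univ ψ ∧ f =ᵐ[volume] laplacian ψ}
  zero_mem' := ⟨fun _ => 0, IsTest.zero, by rw [laplacian_zero]; exact Lp.coeFn_zero ℝ 2 volume⟩
  add_mem' := by
    rintro f g ⟨φ, hφ, hf⟩ ⟨ψ, hψ, hg⟩
    refine ⟨fun y => φ y + ψ y, hφ.add hψ, ?_⟩
    rw [laplacian_fun_add hφ hψ]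
    exact (Lp.coeFn_add f g).trans (hf.add hg)
  smul_mem' := by
    rintro c f ⟨ψ, hψ, hf⟩
    refine ⟨fun y => c * ψ y, hψ.const_mul c, ?_⟩
    rw [laplacian_const_mul hψ]
    exact (Lp.coeFn_smul c f).trans (hf.const_smul c)

lemma inner_toLp_eq_integral {f : E3 → ℝ} (hf : MemLp f 2 volume)
    {g : Lp ℝ 2 (volume : Measure E3)} {ψ : E3 → ℝ} (hg : g =ᵐ[volume] ψ) :
    inner ℝ (hf.toLp f) g = ∫ x, f x * ψ x := by
  rw [L2.inner_def]
  refine integral_congr_ae ?_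
  filter_upwards [hf.coeFn_toLp, hg] with x hfx hgx
  simp [hfx, hgx, mul_comm]

lemma topologicalClosure_laplacianRange : laplacianRange.topologicalClosure = ⊤ := by
  rw [Submodule.topologicalClosure_eq_top_iff, Submodule.eq_bot_iff]
  intro g hg
  rw [Submodule.mem_orthogonal'] at hg
  refine Lp.eq_zero_iff_ae_eq_zero.2
    (ae_eq_zero_of_integral_mul_laplacian_eq_zero (Lp.memLp g) fun ψ hψ => ?_)
  have hψ2 := hψ.laplacian.memLp 2
  rw [← inner_toLp_eq_integral (Lp.memLp g) hψ2.coeFn_toLp, Lp.toLp_coeFn]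
  exact hg _ ⟨ψ, hψ, hψ2.coeFn_toLp⟩

lemma lpNorm_two_le_of_abs_integral_mul_laplacian_le {f : E3 → ℝ} (hf : MemLp f 2 volume) {A : ℝ}
    (hA : 0 ≤ A) (h : ∀ ψ, IsTest univ ψ →
      |∫ x, f x * laplacian ψ x| ≤ A * lpNorm (laplacian ψ) 2 volume) :
    lpNorm f 2 volume ≤ A := by
  have hclosed : IsClosed {g : Lp ℝ 2 (volume : Measure E3) |
      |inner ℝ (hf.toLp f) g| ≤ A * ‖g‖} := isClosed_le (by fun_prop) (by fun_prop)
  have hinner : ∀ g : Lp ℝ 2 (volume : Measure E3), |inner ℝ (hf.toLp f) g| ≤ A * ‖g‖ := fun g => by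
    have hg : g ∈ laplacianRange.topologicalClosure := by
      rw [topologicalClosure_laplacianRange]
      exact Submodule.mem_top
    refine closure_minimal ?_ hclosed hg
    rintro g ⟨ψ, hψ, hg⟩
    rw [mem_ofPred_eq, inner_toLp_eq_integral hf hg, Lp.norm_def, eLpNorm_congr_ae hg,
      toReal_eLpNorm hψ.laplacian.continuous.aestronglyMeasurable]
    exact h ψ hψ
  have hself := hinner (hf.toLp f)
  rw [real_inner_self_eq_norm_sq, abs_of_nonneg (sq_nonneg _), pow_two, Lp.norm_toLp,
    toReal_eLpNorm hf.1] at hself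
  rcases (lpNorm_nonneg (f := f) (p := 2) (μ := volume)).eq_or_lt with hzero | hpos
  · exact hzero ▸ hA
  · exact le_of_mul_le_mul_right hself hpos

end Duality

section DualEstimate

variable {P k : E3 → ℝ} {ε A : ℝ}

/-- `P` is controlled in the dual sense by the Hessian of test functions: the pairing of `P` with
a Laplacian is bounded by a small multiple of its pairing with the Hessian plus an `L²` term. -/
def HessianBound (ε A : ℝ) (P : E3 → ℝ) : Prop :=
  ∀ ψ, IsTest univ ψ → |∫ x, laplacian ψ x * P x| ≤
    ε * (∑ i, ∑ j, ∫ x, |pd (pd ψ i) j x| * P x) + A * lpNorm (laplacian ψ) 2 volume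

lemma HessianBound.comp_sub_right (h : HessianBound ε A P) (a : E3) :
    HessianBound ε A (fun x => P (x - a)) := by
  intro ψ hψ
  have hpd : ∀ i j x, pd (pd (fun y => ψ (y - -a)) i) j x = pd (pd ψ i) j (x - -a) := by
    simp only [pd_comp_sub_right, implies_true]
  have hlap : laplacian (fun y => ψ (y - -a)) = fun x => laplacian ψ (x - -a) := by
    funext x
    simp only [laplacian, hpd]
  have shift : ∀ g : E3 → ℝ, ∫ x, g x * P (x - a) = ∫ x, g (x - -a) * P x := fun g => by
    rw [← integral_sub_right_eq_self _ (-a)]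
    simp
  have bound := h _ (hψ.comp_sub_right (-a))
  simp only [hlap, hpd, lpNorm_comp_sub_right hψ.laplacian.continuous.aestronglyMeasurable]
    at bound
  simpa only [shift] using bound

lemma HessianBound.mollify (h : HessianBound ε A P) (hP : Integrable P volume)
    (hk : IsTest univ k) (hk0 : ∀ x, 0 ≤ k x) (hk1 : ∫ x, k x = 1) :
    HessianBound ε A (mollify k P) := by
  intro ψ hψ
  have hP1 : MemLp P 1 volume := memLp_one_iff_integrable.2 hP
  have hψ2 : ∀ i j, MemLp (fun x => |pd (pd ψ i) j x|) ⊤ volume := fun i j =>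
    (((hψ.pd i).pd j).memLp ⊤).abs
  set L := lpNorm (laplacian ψ) 2 volume
  have hhess : ∀ i j, Integrable (fun a => k a * ∫ x, |pd (pd ψ i) j x| * P (x - a)) volume :=
    fun i j => integrable_kernel_mul_integral hk.integrable (hψ2 i j) hP1
  have hsum : Integrable (fun a => ε * ∑ i, ∑ j, k a * ∫ x, |pd (pd ψ i) j x| * P (x - a))
      volume :=
    (integrable_finsetSum _ fun i _ => integrable_finsetSum _ fun j _ => hhess i j).const_mul ε
  rw [integral_mul_mollify hk.integrable (hψ.laplacian.memLp ⊤) hP1]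
  calc |∫ a, k a * ∫ x, laplacian ψ x * P (x - a)|
      ≤ ∫ a, |k a * ∫ x, laplacian ψ x * P (x - a)| := abs_integral_le_integral_abs
    _ ≤ ∫ a, (ε * (∑ i, ∑ j, k a * ∫ x, |pd (pd ψ i) j x| * P (x - a)) + k a * (A * L)) := by
        refine integral_mono (integrable_kernel_mul_integral hk.integrable
          (hψ.laplacian.memLp ⊤) hP1).abs (hsum.add (hk.integrable.mul_const _)) fun a => ?_
        simp only [abs_mul, abs_of_nonneg (hk0 a), ← Finset.mul_sum]
        rw [mul_left_comm, ← mul_add]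
        exact mul_le_mul_of_nonneg_left (h.comp_sub_right a ψ hψ) (hk0 a)
    _ = ε * (∑ i, ∑ j, ∫ x, |pd (pd ψ i) j x| * _root_.mollify k P x) + A * L := by
        rw [integral_add hsum (hk.integrable.mul_const _), integral_const_mul,
          integral_mul_const, hk1, one_mul,
          integral_finsetSum _ fun i _ => integrable_finsetSum _ fun j _ => hhess i j]
        simp only [integral_finsetSum _ fun j _ => hhess _ j,
          integral_mul_mollify hk.integrable (hψ2 _ _) hP1]

lemma HessianBound.lpNorm_two_le (h : HessianBound ε A P) (hP : MemLp P 2 volume) (hε0 : 0 ≤ ε)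
    (hε : 9 * ε < 1) (hA : 0 ≤ A) : lpNorm P 2 volume ≤ A / (1 - 9 * ε) := by
  have bound : lpNorm P 2 volume ≤ 9 * ε * lpNorm P 2 volume + A := by
    refine lpNorm_two_le_of_abs_integral_mul_laplacian_le hP
      (add_nonneg (mul_nonneg (by positivity) lpNorm_nonneg) hA) fun ψ hψ => ?_
    set L := lpNorm (laplacian ψ) 2 volume
    have hess : ∀ i j, ∫ x, |pd (pd ψ i) j x| * P x ≤ L * lpNorm P 2 volume := fun i j => by
      have hψ2 := ((hψ.pd i).pd j).memLp 2
      refine (le_abs_self _).trans ((abs_integral_mul_le_lpNorm_mul hψ2.abs hP).trans ?_)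
      refine mul_le_mul_of_nonneg_right ?_ lpNorm_nonneg
      exact (lpNorm_abs hψ2.1 2).le.trans (lpNorm_pd_pd_le_lpNorm_laplacian hψ i j)
    have hsum : ∑ i, ∑ j, ∫ x, |pd (pd ψ i) j x| * P x ≤ 9 * (L * lpNorm P 2 volume) :=
      (Finset.sum_le_sum fun i _ => Finset.sum_le_sum fun j _ => hess i j).trans_eq
        (by simp; ring)
    have := h ψ hψ
    simp only [mul_comm (P _)]
    linarith [mul_le_mul_of_nonneg_left hsum hε0]
  rw [le_div_iff₀ (by linarith)]
  linarith

lemma memLp_of_lpNorm_mollify_le (hP : LocallyIntegrable P volume) {C : ℝ}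
    (hmem : ∀ n, MemLp (mollify (mollifier n) P) 2 volume)
    (hle : ∀ n, lpNorm (mollify (mollifier n) P) 2 volume ≤ C) : MemLp P 2 volume := by
  refine ⟨hP.aestronglyMeasurable, (Lp.eLpNorm_lim_le_liminf_eLpNorm (fun n => (hmem n).1) _
    (ae_tendsto_mollify_mollifier hP)).trans_lt ?_⟩
  refine (liminf_le_of_frequently_le' (Frequently.of_forall fun n => ?_)).trans_lt
    (ENNReal.ofReal_lt_top (r := C))
  rw [← ENNReal.ofReal_toReal (hmem n).2.ne, toReal_eLpNorm (hmem n).1]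
  exact ENNReal.ofReal_le_ofReal (hle n)

lemma HessianBound.memLp_two (h : HessianBound ε A P) (hP : Integrable P volume) (hε0 : 0 ≤ ε)
    (hε : 9 * ε < 1) (hA : 0 ≤ A) : MemLp P 2 volume := by
  have hmem : ∀ n, MemLp (_root_.mollify (mollifier n) P) 2 volume := fun n =>
    memLp_two_mollify_of_integrable (isTest_mollifier n) hP
  exact memLp_of_lpNorm_mollify_le hP.locallyIntegrable hmem fun n =>
    (h.mollify hP (isTest_mollifier n) (mollifier_nonneg n)
      (integral_mollifier n)).lpNorm_two_le (hmem n) hε0 hε hA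

end DualEstimate

section Exponents

lemma holderTriple_ofReal {a b c : ℝ} (ha : 0 < a) (hb : 0 < b) (hc : 0 < c)
    (h : a⁻¹ + b⁻¹ = c⁻¹) : ENNReal.HolderTriple (.ofReal a) (.ofReal b) (.ofReal c) where
  inv_add_inv_eq_inv := by
    rw [← ENNReal.ofReal_inv_of_pos ha, ← ENNReal.ofReal_inv_of_pos hb,
      ← ENNReal.ofReal_inv_of_pos hc, ← ENNReal.ofReal_add (by positivity) (by positivity), h]

instance holderTriple_six_six_three : ENNReal.HolderTriple 6 6 3 := by
  simpa using holderTriple_ofReal (a := 6) (b := 6) (c := 3) (by norm_num) (by norm_num)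
    (by norm_num) (by norm_num)

instance holderTriple_six_three_two : ENNReal.HolderTriple 6 3 2 := by
  simpa using holderTriple_ofReal (a := 6) (b := 3) (c := 2) (by norm_num) (by norm_num)
    (by norm_num) (by norm_num)

instance holderTriple_three_six_two : ENNReal.HolderTriple 3 6 2 := .symm

instance holderTriple_threeHalves_six_sixFifths :
    ENNReal.HolderTriple (.ofReal (3 / 2)) 6 (.ofReal (6 / 5)) := by
  simpa using holderTriple_ofReal (a := 3 / 2) (b := 6) (c := 6 / 5) (by norm_num) (by norm_num)
    (by norm_num) (by norm_num)

instance holderConjugate_sixFifths_six : (ENNReal.ofReal (6 / 5)).HolderConjugate 6 := by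
  simpa using holderTriple_ofReal (a := 6 / 5) (b := 6) (c := 1) (by norm_num) (by norm_num)
    (by norm_num) (by norm_num)

instance holderConjugate_threeHalves_three : (ENNReal.ofReal (3 / 2)).HolderConjugate 3 := by
  simpa using holderTriple_ofReal (a := 3 / 2) (b := 3) (c := 1) (by norm_num) (by norm_num)
    (by norm_num) (by norm_num)

/-- The exponent of `∇G`. It is the Hölder conjugate of `momentumExponent γ`. -/
def forceExponent (γ : ℝ) : ℝ≥0∞ := ENNReal.ofReal (6 * γ / (5 * γ - 6))

/-- The exponent of the momentum `ρu`, the product of functions in `L^γ` and in `L⁶`. -/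
def momentumExponent (γ : ℝ) : ℝ≥0∞ := ENNReal.ofReal (6 * γ / (γ + 6))

lemma holderTriple_momentumExponent {γ : ℝ} (hγ : 0 < γ) :
    ENNReal.HolderTriple (ENNReal.ofReal γ) 6 (momentumExponent γ) := by
  have h := holderTriple_ofReal (a := γ) (b := 6) (c := 6 * γ / (γ + 6)) hγ (by norm_num)
    (by positivity) (by field_simp; ring)
  rwa [ENNReal.ofReal_ofNat] at h

lemma holderConjugate_momentumExponent_forceExponent {γ : ℝ} (hγ : 6 < 5 * γ) :
    (momentumExponent γ).HolderConjugate (forceExponent γ) := by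
  have hγ0 : 0 < γ := by linarith
  have hγ6 : 0 < 5 * γ - 6 := by linarith
  have h := holderTriple_ofReal (a := 6 * γ / (γ + 6)) (b := 6 * γ / (5 * γ - 6)) (c := 1)
    (by positivity) (div_pos (by positivity) hγ6) one_pos (by field_simp [hγ6.ne']; ring)
  rwa [ENNReal.ofReal_one] at h

lemma rpow_le_rpow_add_rpow {s a b c : ℝ} (hs : 0 ≤ s) (hb : 0 < b) (hab : a ≤ b) (hbc : b ≤ c) :
    s ^ b ≤ s ^ a + s ^ c := by
  have ha0 : 0 ≤ s ^ a := Real.rpow_nonneg hs _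
  have hc0 : 0 ≤ s ^ c := Real.rpow_nonneg hs _
  rcases hs.eq_or_lt with rfl | hpos
  · rw [Real.zero_rpow hb.ne']
    positivity
  rcases le_total s 1 with hle | hge
  · linarith [Real.rpow_le_rpow_of_exponent_ge hpos hle hab]
  · linarith [Real.rpow_le_rpow_of_exponent_le hge hbc]

lemma mul_sq_le_sq_mul_cube_add_cube_div {d s t : ℝ} (hd : 0 < d) (hs : 0 ≤ s) (ht : 0 ≤ t) :
    s * t ^ 2 ≤ d ^ 2 * s ^ 3 + t ^ 3 / d := by
  rcases le_total t (d * s) with hle | hge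
  · calc s * t ^ 2 ≤ s * (d * s) ^ 2 := by gcongr
      _ = d ^ 2 * s ^ 3 := by ring
      _ ≤ d ^ 2 * s ^ 3 + t ^ 3 / d := le_add_of_nonneg_right (by positivity)
  · calc s * t ^ 2 ≤ t / d * t ^ 2 := by
          gcongr
          rw [le_div_iff₀ hd]
          linarith
      _ = t ^ 3 / d := by ring
      _ ≤ d ^ 2 * s ^ 3 + t ^ 3 / d := le_add_of_nonneg_left (by positivity)

end Exponents

/-- Approximation of `f ∈ D₀^{1,2}(ℝ³)`, with weak gradient `df`, by the test functions `w n`. -/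
structure TestApprox (w : ℕ → E3 → ℝ) (f : E3 → ℝ) (df : Fin 3 → E3 → ℝ) : Prop where
  isTest : ∀ n, IsTest univ (w n)
  tendsto : TendstoInLp 6 volume w atTop f
  tendsto_pd : ∀ j, TendstoInLp 2 volume (fun n => pd (w n) j) atTop (df j)

/-- The entries of the viscous stress tensor of a velocity gradient given componentwise. -/
def stress (μ η : ℝ) (du : Fin 3 → Fin 3 → E3 → ℝ) (i j : Fin 3) (x : E3) : ℝ :=
  Smat μ η (fun k l => du k l x) i j

/-- A weak solution on `ℝ³` with `ρ ∈ L^γ`, in the componentwise form used in the proof: `u i`,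
`du i j` and `dG i` are the components of `u`, `∇u` and `∇G`, approximated through the test
functions `w i n` and `Φ n`. The density is nonnegative everywhere rather than almost
everywhere. -/
structure IntegrableSolution (μ η γ : ℝ) (ρ : E3 → ℝ) (u : Fin 3 → E3 → ℝ)
    (du : Fin 3 → Fin 3 → E3 → ℝ) (dG : Fin 3 → E3 → ℝ) (w : Fin 3 → ℕ → E3 → ℝ)
    (Φ : ℕ → E3 → ℝ) : Prop where
  three_le : 3 ≤ γ
  le_six : γ ≤ 6
  density_nonneg : ∀ x, 0 ≤ ρ x
  density_memLp : MemLp ρ (ENNReal.ofReal γ) volume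
  velocity : ∀ i, TestApprox (w i) (u i) (du i)
  isTest_potential : ∀ n, IsTest univ (Φ n)
  tendsto_force : ∀ i, TendstoInLp (forceExponent γ) volume (fun n => pd (Φ n) i) atTop (dG i)
  mass : ∀ φ, IsTest univ φ → ∫ x, ρ x * ∑ i, u i x * pd φ i x = 0
  momentum : ∀ φ : Fin 3 → E3 → ℝ, (∀ i, IsTest univ (φ i)) →
    ∫ x, ((∑ i, ∑ j, ρ x * u i x * u j x * pd (φ i) j x) + ρ x ^ γ * ∑ i, pd (φ i) i x) =
      (∫ x, ∑ i, ∑ j, stress μ η du i j x * pd (φ i) j x) - ∫ x, ∑ i, ρ x * dG i x * φ i x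

namespace IntegrableSolution

variable {μ η γ : ℝ} {ρ : E3 → ℝ} {u : Fin 3 → E3 → ℝ} {du : Fin 3 → Fin 3 → E3 → ℝ}
  {dG : Fin 3 → E3 → ℝ} {w : Fin 3 → ℕ → E3 → ℝ} {Φ : ℕ → E3 → ℝ}

lemma velocity_memLp (S : IntegrableSolution μ η γ ρ u du dG w Φ) (i : Fin 3) :
    MemLp (u i) 6 volume :=
  (S.velocity i).tendsto.memLp_limit

lemma abs_velocity_cube_memLp (S : IntegrableSolution μ η γ ρ u du dG w Φ) (i : Fin 3) :
    MemLp (fun x => |u i x| ^ 3) 2 volume := by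
  have h6 := (S.velocity_memLp i).abs
  have h3 : MemLp (fun x => |u i x| * |u i x|) 3 volume := h6.mul h6
  have h2 : MemLp (fun x => |u i x| * (|u i x| * |u i x|)) 2 volume := h3.mul h6
  simpa only [pow_succ', pow_zero, mul_one] using h2

lemma velocity_grad_memLp (S : IntegrableSolution μ η γ ρ u du dG w Φ) (i j : Fin 3) :
    MemLp (du i j) 2 volume :=
  ((S.velocity i).tendsto_pd j).memLp_limit

lemma tendsto_stress (S : IntegrableSolution μ η γ ρ u du dG w Φ) (i j : Fin 3) :
    TendstoInLp 2 volume (fun n => stress μ η (fun k => pd (w k n)) i j) atTop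
      (stress μ η du i j) := by
  have expand : ∀ M : Fin 3 → Fin 3 → E3 → ℝ, stress μ η M i j = fun x =>
      μ * (M i j x + M j i x) + (η - 2 / 3 * μ) * (if i = j then 1 else 0) * ∑ k, M k k x := by
    intro M
    funext x
    rw [stress, Smat]
    ring
  have hgrad := fun k l => (S.velocity k).tendsto_pd l
  simp only [expand]
  exact (((hgrad i j).add one_le_two (hgrad j i)).const_mul _).add one_le_two
    ((TendstoInLp.sum one_le_two Finset.univ fun k => hgrad k k).const_mul _)

lemma stress_memLp (S : IntegrableSolution μ η γ ρ u du dG w Φ) (i j : Fin 3) :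
    MemLp (stress μ η du i j) 2 volume :=
  (S.tendsto_stress i j).memLp_limit

lemma integrable_pressure (S : IntegrableSolution μ η γ ρ u du dG w Φ) :
    Integrable (fun x => ρ x ^ γ) volume := by
  have hγ := S.three_le
  have hint := S.density_memLp.integrable_norm_rpow (by simp; linarith) (by simp)
  rw [ENNReal.toReal_ofReal (by linarith)] at hint
  simpa only [Real.norm_of_nonneg (S.density_nonneg _)] using hint

lemma integrable_pressure_mul (S : IntegrableSolution μ η γ ρ u du dG w Φ) {g : E3 → ℝ}
    (hg : IsTest univ g) : Integrable (fun x => ρ x ^ γ * g x) volume := by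
  obtain ⟨C, -, hC⟩ := hg.exists_bound
  exact S.integrable_pressure.mul_bdd hg.continuous.aestronglyMeasurable (Eventually.of_forall hC)

/-- The part of the pointwise bound on `ρ u i u j` that lies in `L²`. -/
def convectionMajorant (γ d : ℝ) (ρ : E3 → ℝ) (u : Fin 3 → E3 → ℝ) (x : E3) : ℝ :=
  d ^ 2 * ρ x ^ (γ / 2) + ∑ k, 1 / d * |u k x| ^ 3

lemma convectionMajorant_memLp (S : IntegrableSolution μ η γ ρ u du dG w Φ) (d : ℝ) :
    MemLp (convectionMajorant γ d ρ u) 2 volume := by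
  have hρ : MemLp (fun x => ρ x ^ (γ / 2)) 2 volume := by
    rw [memLp_two_iff_integrable_sq
      (S.density_memLp.1.aemeasurable.pow_const _).aestronglyMeasurable]
    refine S.integrable_pressure.congr (Eventually.of_forall fun x => ?_)
    simp only
    rw [← Real.rpow_mul_natCast (S.density_nonneg x)]
    norm_num
  exact (hρ.const_mul _).add (memLp_finsetSum _ fun k _ =>
    (S.abs_velocity_cube_memLp k).const_mul _)

lemma abs_convection_le (S : IntegrableSolution μ η γ ρ u du dG w Φ) {d : ℝ} (hd : 0 < d)
    (i j : Fin 3) (x : E3) :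
    |ρ x * u i x * u j x| ≤ d ^ 2 * ρ x ^ γ + convectionMajorant γ d ρ u x := by
  have hρ := S.density_nonneg x
  have cube : ρ x ^ 3 ≤ ρ x ^ (γ / 2) + ρ x ^ γ := by
    have := rpow_le_rpow_add_rpow hρ three_pos (a := γ / 2) (by linarith [S.le_six]) S.three_le
    rwa [Real.rpow_ofNat] at this
  have young : ∀ k, ρ x * |u k x| ^ 2 ≤ d ^ 2 * ρ x ^ γ + convectionMajorant γ d ρ u x := by
    intro k
    have hk : |u k x| ^ 3 / d ≤ ∑ l, 1 / d * |u l x| ^ 3 := by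
      rw [← one_div_mul_eq_div]
      exact Finset.single_le_sum (f := fun l => 1 / d * |u l x| ^ 3)
        (fun l _ => by positivity) (Finset.mem_univ k)
    have := mul_sq_le_sq_mul_cube_add_cube_div hd hρ (abs_nonneg (u k x))
    rw [convectionMajorant]
    linarith [mul_le_mul_of_nonneg_left cube (sq_nonneg d)]
  rw [abs_mul, abs_mul, abs_of_nonneg hρ, mul_assoc]
  linarith [young i, young j, mul_le_mul_of_nonneg_left (two_mul_le_add_sq |u i x| |u j x|) hρ]

lemma integrable_convection_mul (S : IntegrableSolution μ η γ ρ u du dG w Φ) (i j : Fin 3)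
    {g : E3 → ℝ} (hg : IsTest univ g) :
    Integrable (fun x => ρ x * u i x * u j x * g x) volume := by
  have hbound : Integrable (fun x => ρ x ^ γ * |g x| + convectionMajorant γ 1 ρ u x * |g x|)
      volume := by
    refine Integrable.add ?_ (integrable_mul_of_memLp (S.convectionMajorant_memLp 1)
      (hg.memLp 2).abs)
    simpa only [abs_mul, abs_of_nonneg (Real.rpow_nonneg (S.density_nonneg _) γ)] using
      (S.integrable_pressure_mul hg).abs
  refine hbound.mono' (((S.density_memLp.1.mul (S.velocity_memLp i).1).mul
    (S.velocity_memLp j).1).mul hg.continuous.aestronglyMeasurable)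
    (Eventually.of_forall fun x => ?_)
  rw [norm_mul, Real.norm_eq_abs, Real.norm_eq_abs, ← add_mul]
  exact mul_le_mul_of_nonneg_right (by simpa using S.abs_convection_le one_pos i j x)
    (abs_nonneg _)

lemma abs_integral_convection_mul_le (S : IntegrableSolution μ η γ ρ u du dG w Φ) {d : ℝ}
    (hd : 0 < d) (i j : Fin 3) {g : E3 → ℝ} (hg : IsTest univ g) :
    |∫ x, ρ x * u i x * u j x * g x| ≤ d ^ 2 * (∫ x, |g x| * ρ x ^ γ) +
      lpNorm (convectionMajorant γ d ρ u) 2 volume * lpNorm g 2 volume := by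
  have hpressure : Integrable (fun x => |g x| * ρ x ^ γ) volume := by
    simpa only [abs_mul, abs_of_nonneg (Real.rpow_nonneg (S.density_nonneg _) γ), mul_comm] using
      (S.integrable_pressure_mul hg).abs
  have hmajorant : Integrable (fun x => convectionMajorant γ d ρ u x * |g x|) volume :=
    integrable_mul_of_memLp (S.convectionMajorant_memLp d) (hg.memLp 2).abs
  have holder := abs_integral_mul_le_lpNorm_mul (S.convectionMajorant_memLp d) (hg.memLp 2).abs
  rw [lpNorm_abs hg.continuous.aestronglyMeasurable] at holder
  calc |∫ x, ρ x * u i x * u j x * g x|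
      ≤ ∫ x, |ρ x * u i x * u j x * g x| := abs_integral_le_integral_abs
    _ ≤ ∫ x, (d ^ 2 * (|g x| * ρ x ^ γ) + convectionMajorant γ d ρ u x * |g x|) := by
        refine integral_mono (S.integrable_convection_mul i j hg).abs
          ((hpressure.const_mul _).add hmajorant) fun x => ?_
        simp only [abs_mul _ (g x)]
        linarith [mul_le_mul_of_nonneg_right (S.abs_convection_le hd i j x) (abs_nonneg (g x))]
    _ = d ^ 2 * (∫ x, |g x| * ρ x ^ γ) + ∫ x, convectionMajorant γ d ρ u x * |g x| := by
        rw [integral_add (hpressure.const_mul _) hmajorant, integral_const_mul]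
    _ ≤ _ := by
        gcongr
        exact (le_abs_self _).trans holder

lemma density_mul_memLp (S : IntegrableSolution μ η γ ρ u du dG w Φ) {g : E3 → ℝ}
    (hg : MemLp g 6 volume) : MemLp (fun x => ρ x * g x) (momentumExponent γ) volume :=
  have := holderTriple_momentumExponent (show 0 < γ by linarith [S.three_le])
  hg.mul S.density_memLp

lemma integrable_force_mul (S : IntegrableSolution μ η γ ρ u du dG w Φ) (i : Fin 3) {g : E3 → ℝ}
    (hg : MemLp g 6 volume) : Integrable (fun x => ρ x * dG i x * g x) volume := by
  have := holderConjugate_momentumExponent_forceExponent (show 6 < 5 * γ by linarith [S.three_le])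
  simpa only [mul_right_comm] using
    integrable_mul_of_memLp (S.density_mul_memLp hg) (S.tendsto_force i).memLp_limit

lemma abs_integral_force_mul_le (S : IntegrableSolution μ η γ ρ u du dG w Φ) (i : Fin 3)
    {g : E3 → ℝ} (hg : MemLp g 6 volume) :
    |∫ x, ρ x * dG i x * g x| ≤ lpNorm ρ (ENNReal.ofReal γ) volume * lpNorm g 6 volume *
      lpNorm (dG i) (forceExponent γ) volume := by
  have := holderTriple_momentumExponent (show 0 < γ by linarith [S.three_le])
  have := holderConjugate_momentumExponent_forceExponent (show 6 < 5 * γ by linarith [S.three_le])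
  have holder := abs_integral_mul_le_lpNorm_mul (S.density_mul_memLp hg)
    (S.tendsto_force i).memLp_limit
  simp only [mul_right_comm _ (g _)] at holder
  exact holder.trans (mul_le_mul_of_nonneg_right (lpNorm_mul_le S.density_memLp hg) lpNorm_nonneg)

lemma momentum_components (S : IntegrableSolution μ η γ ρ u du dG w Φ) {φ : Fin 3 → E3 → ℝ}
    (hφ : ∀ i, IsTest univ (φ i)) :
    (∑ i, ∑ j, ∫ x, ρ x * u i x * u j x * pd (φ i) j x) + ∫ x, ρ x ^ γ * ∑ i, pd (φ i) i x =
      (∑ i, ∑ j, ∫ x, stress μ η du i j x * pd (φ i) j x) - ∑ i, ∫ x, ρ x * dG i x * φ i x := by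
  have hconv : ∀ i j, Integrable (fun x => ρ x * u i x * u j x * pd (φ i) j x) volume :=
    fun i j => S.integrable_convection_mul i j ((hφ i).pd j)
  have hstress : ∀ i j, Integrable (fun x => stress μ η du i j x * pd (φ i) j x) volume :=
    fun i j => integrable_mul_of_memLp (S.stress_memLp i j) (((hφ i).pd j).memLp 2)
  have hforce : ∀ i, Integrable (fun x => ρ x * dG i x * φ i x) volume := fun i =>
    S.integrable_force_mul i ((hφ i).memLp 6)
  rw [← integral_finsetSum_finsetSum _ _ hconv, ← integral_finsetSum_finsetSum _ _ hstress,
    ← integral_finsetSum _ fun i _ => hforce i,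
    ← integral_add (integrable_finsetSum _ fun i _ => integrable_finsetSum _ fun j _ => hconv i j)
      (S.integrable_pressure_mul (IsTest.sum _ fun i => (hφ i).pd i))]
  exact S.momentum φ hφ

lemma abs_integral_stress_mul_pd_pd_le (S : IntegrableSolution μ η γ ρ u du dG w Φ) (i j : Fin 3)
    {ψ : E3 → ℝ} (hψ : IsTest univ ψ) :
    |∫ x, stress μ η du i j x * pd (pd ψ i) j x| ≤
      lpNorm (stress μ η du i j) 2 volume * lpNorm (laplacian ψ) 2 volume :=
  (abs_integral_mul_le_lpNorm_mul (S.stress_memLp i j) (((hψ.pd i).pd j).memLp 2)).trans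
    (mul_le_mul_of_nonneg_left (lpNorm_pd_pd_le_lpNorm_laplacian hψ i j) lpNorm_nonneg)

lemma abs_integral_convection_mul_pd_pd_le (S : IntegrableSolution μ η γ ρ u du dG w Φ) {d : ℝ}
    (hd : 0 < d) (i j : Fin 3) {ψ : E3 → ℝ} (hψ : IsTest univ ψ) :
    |∫ x, ρ x * u i x * u j x * pd (pd ψ i) j x| ≤
      d ^ 2 * (∫ x, |pd (pd ψ i) j x| * ρ x ^ γ) +
        lpNorm (convectionMajorant γ d ρ u) 2 volume * lpNorm (laplacian ψ) 2 volume :=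
  (S.abs_integral_convection_mul_le hd i j ((hψ.pd i).pd j)).trans <| add_le_add_right
    (mul_le_mul_of_nonneg_left (lpNorm_pd_pd_le_lpNorm_laplacian hψ i j) lpNorm_nonneg) _

lemma exists_abs_integral_force_mul_pd_le (S : IntegrableSolution μ η γ ρ u du dG w Φ) :
    ∃ C, 0 ≤ C ∧ ∀ i ψ, IsTest univ ψ →
      |∫ x, ρ x * dG i x * pd ψ i x| ≤ C * lpNorm (laplacian ψ) 2 volume := by
  obtain ⟨C, hC, sobolev⟩ := exists_sobolev_const
  have hgrad : ∀ i ψ, IsTest univ ψ →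
      lpNorm (pd ψ i) 6 volume ≤ 3 * C * lpNorm (laplacian ψ) 2 volume := fun i ψ hψ =>
    calc lpNorm (pd ψ i) 6 volume ≤ C * ∑ j, lpNorm (pd (pd ψ i) j) 2 volume :=
          sobolev _ (hψ.pd i)
      _ ≤ C * ∑ _j : Fin 3, lpNorm (laplacian ψ) 2 volume := by
          gcongr with j
          exact lpNorm_pd_pd_le_lpNorm_laplacian hψ i j
      _ = 3 * C * lpNorm (laplacian ψ) 2 volume := by
          rw [Finset.sum_const, Finset.card_fin, nsmul_eq_mul]
          push_cast
          ring
  have hterm : ∀ k, 0 ≤ lpNorm ρ (ENNReal.ofReal γ) volume * (3 * C) *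
      lpNorm (dG k) (forceExponent γ) volume := fun k =>
    mul_nonneg (mul_nonneg lpNorm_nonneg (by positivity)) lpNorm_nonneg
  refine ⟨∑ k, lpNorm ρ (ENNReal.ofReal γ) volume * (3 * C) *
    lpNorm (dG k) (forceExponent γ) volume, Finset.sum_nonneg fun k _ => hterm k,
    fun i ψ hψ => ?_⟩
  rw [Finset.sum_mul]
  refine le_trans ?_ (Finset.single_le_sum (fun k _ => mul_nonneg (hterm k) lpNorm_nonneg)
    (Finset.mem_univ i))
  calc |∫ x, ρ x * dG i x * pd ψ i x|
      ≤ lpNorm ρ (ENNReal.ofReal γ) volume * lpNorm (pd ψ i) 6 volume *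
          lpNorm (dG i) (forceExponent γ) volume :=
        S.abs_integral_force_mul_le i ((hψ.pd i).memLp 6)
    _ ≤ lpNorm ρ (ENNReal.ofReal γ) volume * (3 * C * lpNorm (laplacian ψ) 2 volume) *
          lpNorm (dG i) (forceExponent γ) volume := by
        gcongr
        · exact lpNorm_nonneg
        · exact lpNorm_nonneg
        · exact hgrad i ψ hψ
    _ = _ := by ring

lemma exists_hessianBound_pressure (S : IntegrableSolution μ η γ ρ u du dG w Φ) {d : ℝ}
    (hd : 0 < d) : ∃ A, 0 ≤ A ∧ HessianBound (d ^ 2) A fun x => ρ x ^ γ := by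
  obtain ⟨C, hC, force⟩ := S.exists_abs_integral_force_mul_pd_le
  refine ⟨∑ i, ∑ j, (lpNorm (convectionMajorant γ d ρ u) 2 volume +
    lpNorm (stress μ η du i j) 2 volume) + ∑ _i : Fin 3, C, ?_, fun ψ hψ => ?_⟩
  · exact add_nonneg (Finset.sum_nonneg fun i _ => Finset.sum_nonneg fun j _ =>
      add_nonneg lpNorm_nonneg lpNorm_nonneg) (Finset.sum_nonneg fun _ _ => hC)
  have identity := S.momentum_components fun i => hψ.pd i
  have solved : ∫ x, laplacian ψ x * ρ x ^ γ =
      (∑ i, ∑ j, ∫ x, stress μ η du i j x * pd (pd ψ i) j x) -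
        (∑ i, ∑ j, ∫ x, ρ x * u i x * u j x * pd (pd ψ i) j x) -
        ∑ i, ∫ x, ρ x * dG i x * pd ψ i x := by
    simp only [laplacian, mul_comm _ (ρ _ ^ γ)]
    linarith
  have abs_sum_le : ∀ {F B : Fin 3 → Fin 3 → ℝ}, (∀ i j, |F i j| ≤ B i j) →
      |∑ i, ∑ j, F i j| ≤ ∑ i, ∑ j, B i j := fun h =>
    (Finset.abs_sum_le_sum_abs _ _).trans <| Finset.sum_le_sum fun i _ =>
      (Finset.abs_sum_le_sum_abs _ _).trans <| Finset.sum_le_sum fun j _ => h i j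
  have hconv := abs_sum_le fun i j => S.abs_integral_convection_mul_pd_pd_le hd i j hψ
  have hstress := abs_sum_le fun i j => S.abs_integral_stress_mul_pd_pd_le i j hψ
  have hforce := (Finset.abs_sum_le_sum_abs _ _).trans <|
    Finset.sum_le_sum fun i (_ : i ∈ Finset.univ) => force i ψ hψ
  rw [solved]
  refine (abs_sub _ _).trans ((add_le_add ((abs_sub _ _).trans (add_le_add hstress hconv))
    hforce).trans_eq ?_)
  simp only [Finset.sum_add_distrib, Finset.sum_const, nsmul_eq_mul, ← Finset.mul_sum,
    ← Finset.sum_mul]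
  ring

lemma pressure_memLp_two (S : IntegrableSolution μ η γ ρ u du dG w Φ) :
    MemLp (fun x => ρ x ^ γ) 2 volume := by
  obtain ⟨A, hA, hbound⟩ := S.exists_hessianBound_pressure (d := 1 / 6) (by norm_num)
  exact hbound.memLp_two S.integrable_pressure (by norm_num) (by norm_num) hA

lemma density_memLp_six (S : IntegrableSolution μ η γ ρ u du dG w Φ) : MemLp ρ 6 volume := by
  rw [← integrable_norm_rpow_iff S.density_memLp.1 (by norm_num) (by norm_num)]
  refine (S.integrable_pressure.add S.pressure_memLp_two.integrable_sq).mono'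
    ((S.density_memLp.1.norm.aemeasurable.pow_const _).aestronglyMeasurable)
    (Eventually.of_forall fun x => ?_)
  have hρ := S.density_nonneg x
  have := rpow_le_rpow_add_rpow hρ (show (0 : ℝ) < 6 by norm_num) S.le_six
    (show 6 ≤ γ * (2 : ℕ) by push_cast; linarith [S.three_le])
  rw [Real.rpow_mul_natCast hρ] at this
  simpa [Real.norm_of_nonneg hρ, abs_of_nonneg (Real.rpow_nonneg hρ _)] using this

end IntegrableSolution

section Commutator

variable {f ρ F Ψ : E3 → ℝ} {df : Fin 3 → E3 → ℝ} {w : ℕ → E3 → ℝ} {r κ : ℝ} {h : E3}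

/-- The translates of `f` by vectors of norm at most `r` are `κ`-close to `f` in `L^p`. -/
def TranslationBound (p : ℝ≥0∞) (f : E3 → ℝ) (r κ : ℝ) : Prop :=
  ∀ h : E3, ‖h‖ ≤ r → lpNorm (fun x => f (x - h) - f x) p volume ≤ κ

lemma TranslationBound.nonneg {p : ℝ≥0∞} (hf : TranslationBound p f r κ) (hr : 0 ≤ r) : 0 ≤ κ :=
  lpNorm_nonneg.trans (hf 0 (by simpa using hr))

lemma eventually_translationBound {p : ℝ≥0∞} (hp : 1 ≤ p) (hp' : p ≠ ⊤) (hf : MemLp f p volume)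
    (hκ : 0 < κ) : ∀ᶠ n : ℕ in atTop, TranslationBound p f (2 / ((n : ℝ) + 1)) κ := by
  obtain ⟨r, hr, hball⟩ := Metric.eventually_nhds_iff_ball.1
    ((tendsto_lpNorm_translate_sub hp hp' hf).eventually (gt_mem_nhds hκ))
  filter_upwards [(tendsto_const_div_natCast_add_one 2).eventually (gt_mem_nhds hr)] with n hn h hh
  exact (hball h (mem_ball_zero_iff.2 (hh.trans_lt hn))).le

/-- The error of the first-order Taylor expansion of `f`, with gradient `df`, between the points
`x` and `x - h`. -/
def taylorRemainder (f : E3 → ℝ) (df : Fin 3 → E3 → ℝ) (h x : E3) : ℝ :=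
  f x - f (x - h) - ∑ j, h j * df j x

lemma integral_mul_taylorRemainder (hf : Integrable (fun x => Ψ x * f x) volume)
    (hf' : Integrable (fun x => Ψ x * f (x - h)) volume)
    (hdf : ∀ j, Integrable (fun x => Ψ x * df j x) volume) :
    ∫ x, Ψ x * taylorRemainder f df h x =
      (∫ x, Ψ x * f x) - (∫ x, Ψ x * f (x - h)) - ∑ j, h j * ∫ x, Ψ x * df j x := by
  have expand : ∀ x, Ψ x * taylorRemainder f df h x =
      (Ψ x * f x - Ψ x * f (x - h)) - ∑ j, h j * (Ψ x * df j x) := fun x => by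
    rw [taylorRemainder, mul_sub, mul_sub, Finset.mul_sum]
    simp only [mul_left_comm]
  have hsub : Integrable (fun x => Ψ x * f x - Ψ x * f (x - h)) volume := hf.sub hf'
  simp only [expand]
  rw [integral_sub hsub (integrable_finsetSum _ fun j _ => (hdf j).const_mul _),
    integral_sub hf hf', integral_finsetSum _ fun j _ => (hdf j).const_mul _]
  simp only [integral_const_mul]

lemma mollify_comp_neg_apply (k Ψ : E3 → ℝ) (ξ : E3) :
    mollify (fun z => k (0 - z)) Ψ ξ = ∫ x, Ψ x * k (x - ξ) := by
  rw [mollify_apply]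
  simp only [zero_sub, neg_sub, mul_comm]

lemma pd_mollify_comp_neg_apply {k : E3 → ℝ} (hk : IsTest univ k)
    (hΨ : LocallyIntegrable Ψ volume) (j : Fin 3) (ξ : E3) :
    pd (mollify (fun z => k (0 - z)) Ψ) j ξ = -∫ x, Ψ x * pd k j (x - ξ) := by
  rw [pd_mollify (hk.comp_sub_left 0) hΨ, pd_comp_sub_left,
    mollify_comp_neg_apply (fun z => -pd k j z), ← integral_neg]
  simp only [mul_neg]

lemma abs_pd_mollify_comp_neg_sub_le {k : E3 → ℝ} (hk : IsTest univ k) (hΨ : MemLp Ψ 2 volume)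
    {j : Fin 3} (hκ : TranslationBound 2 (pd k j) r κ) {ξ : E3} (hξ : ‖ξ‖ ≤ r) :
    |pd (mollify (fun z => k (0 - z)) Ψ) j ξ - pd (mollify (fun z => k (0 - z)) Ψ) j 0| ≤
      lpNorm Ψ 2 volume * κ := by
  have hΨloc := hΨ.locallyIntegrable one_le_two
  have hshift : MemLp (fun x => pd k j (x - ξ)) 2 volume :=
    memLp_comp_sub_right ((hk.pd j).memLp 2) ξ
  have hdiff : pd (mollify (fun z => k (0 - z)) Ψ) j ξ - pd (mollify (fun z => k (0 - z)) Ψ) j 0 =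
      -∫ x, Ψ x * (pd k j (x - ξ) - pd k j x) := by
    simp only [pd_mollify_comp_neg_apply hk hΨloc, sub_zero, mul_sub]
    rw [integral_sub (integrable_mul_of_memLp hΨ hshift)
      (integrable_mul_of_memLp hΨ ((hk.pd j).memLp 2))]
    ring
  rw [hdiff, abs_neg]
  exact (abs_integral_mul_le_lpNorm_mul hΨ (hshift.sub ((hk.pd j).memLp 2))).trans
    (mul_le_mul_of_nonneg_left (hκ ξ hξ) lpNorm_nonneg)

-- The mean value inequality is applied to the smooth function `ξ ↦ ∫ Ψ(x) k(x - ξ) dx`.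
lemma abs_integral_mul_taylorRemainder_le_of_isTest {k : E3 → ℝ} (hk : IsTest univ k)
    (hΨ : MemLp Ψ 2 volume) (hκ : ∀ j, TranslationBound 2 (pd k j) r κ) (hh : ‖h‖ ≤ r) :
    |∫ x, Ψ x * taylorRemainder k (pd k) h x| ≤ 3 * lpNorm Ψ 2 volume * κ * ‖h‖ := by
  have hΨloc := hΨ.locallyIntegrable one_le_two
  set A := mollify (fun z => k (0 - z)) Ψ with hA
  have hfderiv : ∀ ξ ∈ closedBall (0 : E3) r,
      ‖fderiv ℝ A ξ - fderiv ℝ A 0‖ ≤ 3 * lpNorm Ψ 2 volume * κ := fun ξ hξ =>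
    calc ‖fderiv ℝ A ξ - fderiv ℝ A 0‖ ≤ ∑ j, |pd A j ξ - pd A j 0| :=
          opNorm_le_sum_abs_apply_single _
      _ ≤ ∑ _j : Fin 3, lpNorm Ψ 2 volume * κ := Finset.sum_le_sum fun j _ =>
          abs_pd_mollify_comp_neg_sub_le hk hΨ (hκ j) (mem_closedBall_zero_iff.1 hξ)
      _ = 3 * lpNorm Ψ 2 volume * κ := by
          rw [Finset.sum_const, Finset.card_fin, nsmul_eq_mul, Nat.cast_ofNat, mul_assoc]
  have mean_value := Convex.norm_image_sub_le_of_norm_fderiv_le' (𝕜 := ℝ) (x := 0) (y := h)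
    (fun ξ _ => ((contDiff_mollify (hk.comp_sub_left 0) hΨloc).differentiable one_ne_zero) ξ)
    hfderiv (convex_closedBall _ _) (mem_closedBall_self ((norm_nonneg h).trans hh))
    (mem_closedBall_zero_iff.2 hh)
  have hfderiv_apply : fderiv ℝ A 0 h = ∑ j, h j * pd A j 0 := apply_eq_sum_mul_apply_single _ h
  rw [sub_zero, hfderiv_apply, Real.norm_eq_abs] at mean_value
  refine (Eq.trans ?_ (abs_neg _)).trans_le mean_value
  rw [integral_mul_taylorRemainder (integrable_mul_of_memLp hΨ (hk.memLp 2))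
    (integrable_mul_of_memLp hΨ ((hk.comp_sub_right h).memLp 2))
    fun j => integrable_mul_of_memLp hΨ ((hk.pd j).memLp 2)]
  simp only [hA, pd_mollify_comp_neg_apply hk hΨloc, mollify_comp_neg_apply, sub_zero, mul_neg,
    Finset.sum_neg_distrib]
  ring_nf

lemma TestApprox.tendsto_integral_mul_taylorRemainder (hf : TestApprox w f df)
    (hΨ : MemLp Ψ 2 volume) (hΨ' : MemLp Ψ (.ofReal (6 / 5)) volume) (h : E3) :
    Tendsto (fun n => ∫ x, Ψ x * taylorRemainder (w n) (pd (w n)) h x) atTop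
      (𝓝 (∫ x, Ψ x * taylorRemainder f df h x)) := by
  have hvalue : TendstoInLp 1 volume (fun n x => Ψ x * (w n x - w n (x - h))) atTop
      fun x => Ψ x * (f x - f (x - h)) :=
    (TendstoInLp.const hΨ').mul (by norm_num) le_rfl
      (hf.tendsto.sub (by norm_num) (hf.tendsto.comp_sub_right h))
  have hgrad : TendstoInLp 1 volume (fun n x => Ψ x * ∑ j, h j * pd (w n) j x) atTop
      fun x => Ψ x * ∑ j, h j * df j x :=
    (TendstoInLp.const hΨ).mul (by norm_num) le_rfl
      (TendstoInLp.sum (by norm_num) _ fun j => (hf.tendsto_pd j).const_mul (h j))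
  simpa only [taylorRemainder, mul_sub] using (hvalue.sub le_rfl hgrad).tendsto_integral

lemma TestApprox.abs_integral_mul_taylorRemainder_le (hf : TestApprox w f df)
    (hΨ : MemLp Ψ 2 volume) (hΨ' : MemLp Ψ (.ofReal (6 / 5)) volume)
    (hκ : ∀ j, TranslationBound 2 (df j) r κ) (hh : ‖h‖ ≤ r) :
    |∫ x, Ψ x * taylorRemainder f df h x| ≤ 3 * lpNorm Ψ 2 volume * κ * ‖h‖ := by
  set ε : ℕ → ℝ := fun n => ∑ j, 2 * lpNorm (pd (w n) j - df j) 2 volume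
  have hε : Tendsto ε atTop (𝓝 0) := by
    simpa using tendsto_finsetSum Finset.univ fun j (_ : j ∈ Finset.univ) =>
      (hf.tendsto_pd j).tendsto_lpNorm_sub.const_mul 2
  have bound : ∀ n, |∫ x, Ψ x * taylorRemainder (w n) (pd (w n)) h x| ≤
      3 * lpNorm Ψ 2 volume * (κ + ε n) * ‖h‖ := fun n =>
    abs_integral_mul_taylorRemainder_le_of_isTest (hf.isTest n) hΨ (fun j ξ hξ =>
      (lpNorm_translate_sub_le_add one_le_two ((hf.tendsto_pd j).memLp n)
        (hf.tendsto_pd j).memLp_limit ξ).trans <| add_le_add (hκ j ξ hξ) <|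
          Finset.single_le_sum (f := fun j => 2 * lpNorm (pd (w n) j - df j) 2 volume)
            (fun j _ => mul_nonneg zero_le_two lpNorm_nonneg) (Finset.mem_univ j)) hh
  have bound_tendsto := ((hε.const_add κ).const_mul (3 * lpNorm Ψ 2 volume)).mul_const ‖h‖
  rw [add_zero] at bound_tendsto
  exact le_of_tendsto_of_tendsto' (hf.tendsto_integral_mul_taylorRemainder hΨ hΨ' h).abs
    bound_tendsto bound

lemma abs_integral_mul_translate_mul_sub_le {g : E3 → ℝ} (hF : MemLp F 3 volume)
    (hρ : MemLp ρ 6 volume) (hg : MemLp g 2 volume) (hκ : TranslationBound 6 ρ r κ)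
    (hh : ‖h‖ ≤ r) :
    |(∫ x, F x * ρ (x - h) * g x) - ∫ x, F x * ρ x * g x| ≤
      lpNorm F 3 volume * κ * lpNorm g 2 volume := by
  have hρ' := memLp_comp_sub_right hρ h
  have hsub : MemLp (fun x => ρ (x - h) - ρ x) 6 volume := hρ'.sub hρ
  have hFρ : MemLp (fun x => F x * ρ x) 2 volume := hρ.mul hF
  have hFρ' : MemLp (fun x => F x * ρ (x - h)) 2 volume := hρ'.mul hF
  have hFsub : MemLp (fun x => F x * (ρ (x - h) - ρ x)) 2 volume := hsub.mul hF
  have hdiff : (∫ x, F x * ρ (x - h) * g x) - ∫ x, F x * ρ x * g x =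
      ∫ x, F x * (ρ (x - h) - ρ x) * g x := by
    rw [← integral_sub (integrable_mul_of_memLp hFρ' hg) (integrable_mul_of_memLp hFρ hg)]
    simp only [mul_sub, sub_mul]
  rw [hdiff]
  refine (abs_integral_mul_le_lpNorm_mul hFsub hg).trans
    (mul_le_mul_of_nonneg_right ((lpNorm_mul_le hF hsub).trans ?_) lpNorm_nonneg)
  exact mul_le_mul_of_nonneg_left (hκ h hh) lpNorm_nonneg

lemma TestApprox.translation_commutator_eq (hf : TestApprox w f df) (hρ : MemLp ρ 6 volume)
    (hF : MemLp F 3 volume) (hF' : MemLp F (.ofReal (3 / 2)) volume) (h : E3) :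
    (∫ x, F x * f x * ρ (x - h)) - (∫ x, F x * (ρ (x - h) * f (x - h))) -
        ∑ j, h j * ∫ x, F x * ρ x * df j x =
      (∫ x, F x * ρ (x - h) * taylorRemainder f df h x) +
        ∑ j, h j * ((∫ x, F x * ρ (x - h) * df j x) - ∫ x, F x * ρ x * df j x) := by
  have hρ' := memLp_comp_sub_right hρ h
  have hΨ : MemLp (fun x => F x * ρ (x - h)) 2 volume := hρ'.mul hF
  have hΨ' : MemLp (fun x => F x * ρ (x - h)) (.ofReal (6 / 5)) volume := hρ'.mul hF'
  rw [integral_mul_taylorRemainder (integrable_mul_of_memLp hΨ' hf.tendsto.memLp_limit)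
    (integrable_mul_of_memLp hΨ' (memLp_comp_sub_right hf.tendsto.memLp_limit h))
    fun j => integrable_mul_of_memLp hΨ (hf.tendsto_pd j).memLp_limit]
  simp only [mul_sub, Finset.sum_sub_distrib, mul_right_comm (F _) (f _), mul_assoc]
  ring

lemma TestApprox.abs_translation_commutator_le (hf : TestApprox w f df) (hρ : MemLp ρ 6 volume)
    (hF : MemLp F 3 volume) (hF' : MemLp F (.ofReal (3 / 2)) volume)
    (hκ : ∀ j, TranslationBound 2 (df j) r κ) (hκ' : TranslationBound 6 ρ r κ) (hh : ‖h‖ ≤ r) :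
    |(∫ x, F x * f x * ρ (x - h)) - (∫ x, F x * (ρ (x - h) * f (x - h))) -
        ∑ j, h j * ∫ x, F x * ρ x * df j x| ≤
      lpNorm F 3 volume * (3 * lpNorm ρ 6 volume + ∑ j, lpNorm (df j) 2 volume) * κ * ‖h‖ := by
  have hρ' := memLp_comp_sub_right hρ h
  have hnorm : lpNorm (fun x => F x * ρ (x - h)) 2 volume ≤
      lpNorm F 3 volume * lpNorm ρ 6 volume := by
    simpa only [lpNorm_comp_sub_right hρ.1] using lpNorm_mul_le (r := 2) hF hρ'
  have hκ0 : 0 ≤ κ := hκ'.nonneg ((norm_nonneg h).trans hh)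
  have hTaylor : |∫ x, F x * ρ (x - h) * taylorRemainder f df h x| ≤
      3 * (lpNorm F 3 volume * lpNorm ρ 6 volume) * κ * ‖h‖ :=
    (hf.abs_integral_mul_taylorRemainder_le (hρ'.mul hF) (hρ'.mul hF') hκ hh).trans <|
      by gcongr; exact hnorm
  have hgrad : |∑ j, h j * ((∫ x, F x * ρ (x - h) * df j x) - ∫ x, F x * ρ x * df j x)| ≤
      ∑ j, ‖h‖ * (lpNorm F 3 volume * κ * lpNorm (df j) 2 volume) := by
    refine (Finset.abs_sum_le_sum_abs _ _).trans (Finset.sum_le_sum fun j _ => ?_)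
    rw [abs_mul]
    exact mul_le_mul (PiLp.norm_apply_le h j) (abs_integral_mul_translate_mul_sub_le hF hρ
      (hf.tendsto_pd j).memLp_limit hκ' hh) (abs_nonneg _) (norm_nonneg _)
  rw [hf.translation_commutator_eq hρ hF hF' h]
  refine (abs_add_le _ _).trans ((add_le_add hTaylor hgrad).trans_eq ?_)
  simp only [← Finset.mul_sum]
  ring

lemma TestApprox.mollify_commutator_eq (hf : TestApprox w f df) (hρ : MemLp ρ 6 volume)
    (hF' : MemLp F (.ofReal (3 / 2)) volume) (n : ℕ) (i : Fin 3) :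
    (∫ x, F x * f x * mollify (pd (mollifier n) i) ρ x) -
        (∫ x, F x * mollify (pd (mollifier n) i) (fun y => ρ y * f y) x) +
        ∫ x, F x * ρ x * df i x =
      ∫ h, pd (mollifier n) i h * ((∫ x, F x * f x * ρ (x - h)) -
        (∫ x, F x * (ρ (x - h) * f (x - h))) - ∑ j, h j * ∫ x, F x * ρ x * df j x) := by
  have hk : IsTest univ (pd (mollifier n) i) := (isTest_mollifier n).pd i
  have hFf : MemLp (fun x => F x * f x) (.ofReal (6 / 5)) volume := hf.tendsto.memLp_limit.mul hF'
  have hρf : MemLp (fun x => ρ x * f x) 3 volume := hf.tendsto.memLp_limit.mul hρ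
  have hmoment : ∀ j, Integrable (fun h : E3 => pd (mollifier n) i h * h j) volume := fun j =>
    (hk.continuous.mul (by fun_prop)).integrable_of_hasCompactSupport
      hk.hasCompactSupport.mul_right
  have hleft := integrable_kernel_mul_integral hk.integrable hFf hρ
  have hright := integrable_kernel_mul_integral hk.integrable hF' hρf
  rw [integral_mul_mollify hk.integrable hFf hρ, integral_mul_mollify hk.integrable hF' hρf]
  have expand : ∀ h : E3, pd (mollifier n) i h * ((∫ x, F x * f x * ρ (x - h)) -
      (∫ x, F x * (ρ (x - h) * f (x - h))) - ∑ j, h j * ∫ x, F x * ρ x * df j x) =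
      (pd (mollifier n) i h * (∫ x, F x * f x * ρ (x - h)) -
        pd (mollifier n) i h * ∫ x, F x * (ρ (x - h) * f (x - h))) -
        ∑ j, pd (mollifier n) i h * h j * ∫ x, F x * ρ x * df j x := fun h => by
    simp only [mul_sub, Finset.mul_sum, mul_assoc]
  have hsub : Integrable (fun h => pd (mollifier n) i h * (∫ x, F x * f x * ρ (x - h)) -
      pd (mollifier n) i h * ∫ x, F x * (ρ (x - h) * f (x - h))) volume := hleft.sub hright
  simp only [expand]
  rw [integral_sub hsub (integrable_finsetSum _ fun j _ => (hmoment j).mul_const _),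
    integral_sub hleft hright, integral_finsetSum _ fun j _ => (hmoment j).mul_const _]
  simp [integral_mul_const, integral_pd_mollifier_mul_apply]

lemma TestApprox.abs_mollify_commutator_le (hf : TestApprox w f df) (hρ : MemLp ρ 6 volume)
    (hF : MemLp F 3 volume) (hF' : MemLp F (.ofReal (3 / 2)) volume) {n : ℕ}
    (hκ : ∀ j, TranslationBound 2 (df j) (2 / ((n : ℝ) + 1)) κ)
    (hκ' : TranslationBound 6 ρ (2 / ((n : ℝ) + 1)) κ) (i : Fin 3) :
    |(∫ x, F x * f x * mollify (pd (mollifier n) i) ρ x) -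
        (∫ x, F x * mollify (pd (mollifier n) i) (fun y => ρ y * f y) x) +
        ∫ x, F x * ρ x * df i x| ≤
      lpNorm F 3 volume * (3 * lpNorm ρ 6 volume + ∑ j, lpNorm (df j) 2 volume) * κ *
        ∫ h, ‖h‖ * |pd (mollifier 0) i h| := by
  have hk : IsTest univ (pd (mollifier n) i) := (isTest_mollifier n).pd i
  set K := lpNorm F 3 volume * (3 * lpNorm ρ 6 volume + ∑ j, lpNorm (df j) 2 volume) * κ
  have hint : Integrable (fun h : E3 => K * (‖h‖ * |pd (mollifier n) i h|)) volume :=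
    ((continuous_norm.mul hk.continuous.abs).integrable_of_hasCompactSupport
      hk.hasCompactSupport.abs.mul_left).const_mul K
  rw [hf.mollify_commutator_eq hρ hF' n i, ← integral_norm_mul_abs_pd_mollifier n i,
    ← integral_const_mul, ← Real.norm_eq_abs]
  refine norm_integral_le_of_norm_le hint (Eventually.of_forall fun h => ?_)
  rcases le_or_gt ‖h‖ (2 / ((n : ℝ) + 1)) with hh | hh
  · rw [norm_mul, mul_comm, ← mul_assoc]
    exact mul_le_mul_of_nonneg_right (hf.abs_translation_commutator_le hρ hF hF' hκ hκ' hh)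
      (norm_nonneg _)
  · simp [pd_mollifier_eq_zero hh]

lemma tendsto_zero_of_forall_eventually_abs_le_mul {ι : Type*} {l : Filter ι} {a : ι → ℝ} {K : ℝ}
    (h : ∀ κ, 0 < κ → ∀ᶠ n in l, |a n| ≤ K * κ) : Tendsto a l (𝓝 0) := by
  rw [Metric.tendsto_nhds]
  intro ε hε
  have hK : 0 < |K| + 1 := by positivity
  filter_upwards [h (ε / (|K| + 1)) (by positivity)] with n hn
  rw [Real.dist_0_eq_abs]
  refine hn.trans_lt ?_
  rw [mul_div_assoc', div_lt_iff₀ hK]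
  nlinarith [le_abs_self K]

end Commutator

namespace IntegrableSolution

variable {μ η γ : ℝ} {ρ : E3 → ℝ} {u : Fin 3 → E3 → ℝ} {du : Fin 3 → Fin 3 → E3 → ℝ}
  {dG : Fin 3 → E3 → ℝ} {w : Fin 3 → ℕ → E3 → ℝ} {Φ : ℕ → E3 → ℝ}

lemma momentum_memLp_three (S : IntegrableSolution μ η γ ρ u du dG w Φ) (i : Fin 3) :
    MemLp (fun x => ρ x * u i x) 3 volume :=
  (S.velocity_memLp i).mul S.density_memLp_six

lemma sum_mollify_pd_mollifier_momentum (S : IntegrableSolution μ η γ ρ u du dG w Φ) (n : ℕ)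
    (x : E3) : ∑ i, mollify (pd (mollifier n) i) (fun y => ρ y * u i y) x = 0 := by
  have hint : ∀ i, Integrable (fun y => pd (mollifier n) i (x - y) * (ρ y * u i y)) volume :=
    fun i => integrable_kernel_mul ((isTest_mollifier n).pd i)
      ((S.momentum_memLp_three i).locallyIntegrable (by norm_num)) x
  have hmass := S.mass _ ((isTest_mollifier n).comp_sub_left x)
  simp only [pd_comp_sub_left, mul_neg, Finset.sum_neg_distrib, integral_neg, neg_eq_zero] at hmass
  simp only [mollify_apply]
  rw [← integral_finsetSum _ fun i _ => hint i, ← hmass]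
  refine integral_congr_ae (Eventually.of_forall fun y => ?_)
  simp only [Finset.mul_sum]
  exact Finset.sum_congr rfl fun i _ => by ring

lemma sum_commutator_eq (S : IntegrableSolution μ η γ ρ u du dG w Φ) {F : E3 → ℝ}
    (hF : MemLp F (.ofReal (3 / 2)) volume) (n : ℕ) :
    (∑ i, ∫ x, F x * u i x * mollify (pd (mollifier n) i) ρ x) +
        ∑ i, ∫ x, F x * ρ x * du i i x =
      ∑ i, ((∫ x, F x * u i x * mollify (pd (mollifier n) i) ρ x) -
        (∫ x, F x * mollify (pd (mollifier n) i) (fun y => ρ y * u i y) x) +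
        ∫ x, F x * ρ x * du i i x) := by
  have hzero : ∑ i, ∫ x, F x * mollify (pd (mollifier n) i) (fun y => ρ y * u i y) x = 0 := by
    rw [← integral_finsetSum _ fun i _ => integrable_mul_mollify
      ((isTest_mollifier n).pd i).integrable hF (S.momentum_memLp_three i)]
    simp only [← Finset.mul_sum, S.sum_mollify_pd_mollifier_momentum, mul_zero, integral_zero]
  rw [Finset.sum_add_distrib, Finset.sum_sub_distrib, hzero, sub_zero]

lemma tendsto_commutator (S : IntegrableSolution μ η γ ρ u du dG w Φ) {F : ℕ → E3 → ℝ} {B : ℝ}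
    (hF : ∀ n, MemLp (F n) 3 volume) (hF' : ∀ n, MemLp (F n) (.ofReal (3 / 2)) volume)
    (hB : ∀ n, lpNorm (F n) 3 volume ≤ B) :
    Tendsto (fun n => (∑ i, ∫ x, F n x * u i x * mollify (pd (mollifier n) i) ρ x) +
      ∑ i, ∫ x, F n x * ρ x * du i i x) atTop (𝓝 0) := by
  refine tendsto_zero_of_forall_eventually_abs_le_mul (K := ∑ i, B * (3 * lpNorm ρ 6 volume +
    ∑ j, lpNorm (du i j) 2 volume) * ∫ h, ‖h‖ * |pd (mollifier 0) i h|) fun κ hκ => ?_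
  have hdensity := eventually_translationBound (by norm_num) (by norm_num) S.density_memLp_six hκ
  have hgrad : ∀ᶠ n : ℕ in atTop, ∀ i j,
      TranslationBound 2 (du i j) (2 / ((n : ℝ) + 1)) κ := by
    simp only [eventually_all]
    exact fun i j => eventually_translationBound (by norm_num) (by norm_num)
      (S.velocity_grad_memLp i j) hκ
  filter_upwards [hdensity, hgrad] with n hρn hdun
  rw [S.sum_commutator_eq (hF' n) n, Finset.sum_mul]
  refine (Finset.abs_sum_le_sum_abs _ _).trans (Finset.sum_le_sum fun i _ => ?_)
  have hmoment : 0 ≤ ∫ h, ‖h‖ * |pd (mollifier 0) i h| :=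
    integral_nonneg fun h => by positivity
  have hnorms : 0 ≤ 3 * lpNorm ρ 6 volume + ∑ j, lpNorm (du i j) 2 volume :=
    add_nonneg (mul_nonneg zero_le_three lpNorm_nonneg) (Finset.sum_nonneg fun j _ => lpNorm_nonneg)
  refine ((S.velocity i).abs_mollify_commutator_le S.density_memLp_six (hF n) (hF' n) (hdun i) hρn
    i).trans ?_
  rw [mul_right_comm]
  exact mul_le_mul_of_nonneg_right (mul_le_mul_of_nonneg_right
    (mul_le_mul_of_nonneg_right (hB n) hnorms) hmoment) hκ.le

end IntegrableSolution

section Renormalization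

variable {b : ℝ → ℝ} {f ρ R g ζ : E3 → ℝ} {df : Fin 3 → E3 → ℝ} {w : ℕ → E3 → ℝ}

lemma pd_comp_fun (hb : Differentiable ℝ b) (hR : Differentiable ℝ R) (i : Fin 3) :
    pd (fun y => b (R y)) i = fun x => deriv b (R x) * pd R i x := by
  funext x
  have hderiv : HasFDerivAt (fun y => b (R y)) _ x :=
    (hb (R x)).hasDerivAt.comp_hasFDerivAt x (hR x).hasFDerivAt
  simp only [pd, hderiv.fderiv, smul_apply, smul_eq_mul]

lemma TestApprox.integral_pd_mul_eq_neg (hf : TestApprox w f df) (hg : ContDiff ℝ 1 g)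
    (hc : HasCompactSupport g) (j : Fin 3) : ∫ x, pd g j x * f x = -∫ x, g x * df j x := by
  have hpd : MemLp (pd g j) (.ofReal (6 / 5)) volume :=
    (continuous_pd hg j).memLp_of_hasCompactSupport (hasCompactSupport_pd hc j)
  have hleft : TendstoInLp 1 volume (fun n x => pd g j x * w n x) atTop fun x => pd g j x * f x :=
    (TendstoInLp.const hpd).mul (by norm_num) le_rfl hf.tendsto
  have hright : TendstoInLp 1 volume (fun n x => g x * pd (w n) j x) atTop
      fun x => g x * df j x :=
    (TendstoInLp.const (p := 2) (hg.continuous.memLp_of_hasCompactSupport hc)).mul one_le_two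
      le_rfl (hf.tendsto_pd j)
  refine tendsto_nhds_unique hleft.tendsto_integral
    (hright.tendsto_integral.neg.congr fun n => ?_)
  rw [integral_mul_pd_eq_neg hg hc (hf.isTest n).contDiff_one, neg_neg]

lemma TestApprox.integral_mul_deriv_comp_mul_pd (hf : TestApprox w f df) (hb : ContDiff ℝ 1 b)
    (hR : ContDiff ℝ 1 R) (hζ : IsTest univ ζ) (i : Fin 3) :
    ∫ x, ζ x * deriv b (R x) * f x * pd R i x =
      -(∫ x, ζ x * df i x * b (R x)) - ∫ x, pd ζ i x * f x * b (R x) := by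
  have hbR : ContDiff ℝ 1 fun x => b (R x) := hb.comp hR
  have hderiv : Continuous fun x => deriv b (R x) :=
    (hb.continuous_deriv le_rfl).comp hR.continuous
  have hleft : MemLp (fun x => ζ x * deriv b (R x) * pd R i x) (.ofReal (6 / 5)) volume :=
    ((hζ.continuous.mul hderiv).mul (continuous_pd hR i)).memLp_of_hasCompactSupport
      hζ.hasCompactSupport.mul_right.mul_right
  have hright : MemLp (fun x => pd ζ i x * b (R x)) (.ofReal (6 / 5)) volume :=
    ((hζ.pd i).continuous.mul hbR.continuous).memLp_of_hasCompactSupport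
      (hζ.pd i).hasCompactSupport.mul_right
  have parts := hf.integral_pd_mul_eq_neg (hζ.contDiff_one.mul hbR)
    hζ.hasCompactSupport.mul_right i
  rw [pd_fun_mul hζ.differentiable (hbR.differentiable one_ne_zero),
    pd_comp_fun (hb.differentiable one_ne_zero) (hR.differentiable one_ne_zero)] at parts
  simp only [← mul_assoc, add_mul] at parts
  rw [integral_add (integrable_mul_of_memLp hleft hf.tendsto.memLp_limit)
    (integrable_mul_of_memLp hright hf.tendsto.memLp_limit)] at parts
  simp only [mul_right_comm _ (f _), mul_right_comm _ (df i _)]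
  linarith

lemma tendsto_integral_mul_comp_mollify (hρ : LocallyIntegrable ρ volume)
    (hg : Integrable g volume) (hb : Continuous b) {M : ℝ} (hM : ∀ s, |b s| ≤ M) :
    Tendsto (fun n => ∫ x, g x * b (mollify (mollifier n) ρ x)) atTop
      (𝓝 (∫ x, g x * b (ρ x))) := by
  refine tendsto_integral_of_dominated_convergence (fun x => |g x| * M)
    (fun n => hg.1.mul
      (hb.comp (contDiff_mollify (isTest_mollifier n) hρ).continuous).aestronglyMeasurable)
    (hg.abs.mul_const M) (fun n => Eventually.of_forall fun x => ?_) ?_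
  · rw [norm_mul]
    exact mul_le_mul_of_nonneg_left (hM _) (abs_nonneg _)
  · filter_upwards [ae_tendsto_mollify_mollifier hρ] with x hx
    exact ((hb.tendsto _).comp hx).const_mul _

end Renormalization

namespace IntegrableSolution

variable {μ η γ : ℝ} {ρ : E3 → ℝ} {u : Fin 3 → E3 → ℝ} {du : Fin 3 → Fin 3 → E3 → ℝ}
  {dG : Fin 3 → E3 → ℝ} {w : Fin 3 → ℕ → E3 → ℝ} {Φ : ℕ → E3 → ℝ}

lemma integrable_test_mul_density_mul_grad (S : IntegrableSolution μ η γ ρ u du dG w Φ)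
    {ζ : E3 → ℝ} (hζ : IsTest univ ζ) (i j : Fin 3) :
    Integrable (fun x => ζ x * ρ x * du i j x) volume :=
  integrable_mul_of_memLp (S.density_memLp_six.mul (hζ.memLp 3) : MemLp (ζ * ρ) 2 volume)
    (S.velocity_grad_memLp i j)

lemma commutator_eq_renormalized (S : IntegrableSolution μ η γ ρ u du dG w Φ) {b : ℝ → ℝ}
    (hb : ContDiff ℝ 1 b) {ζ : E3 → ℝ} (hζ : IsTest univ ζ) (n : ℕ) :
    (∑ i, ∫ x, ζ x * deriv b (mollify (mollifier n) ρ x) * u i x *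
        mollify (pd (mollifier n) i) ρ x) +
        ∑ i, ∫ x, ζ x * deriv b (mollify (mollifier n) ρ x) * ρ x * du i i x =
      (∑ i, ∫ x, ζ x * ρ x * du i i x * deriv b (mollify (mollifier n) ρ x)) -
        (∑ i, ∫ x, ζ x * du i i x * b (mollify (mollifier n) ρ x)) -
        ∑ i, ∫ x, pd ζ i x * u i x * b (mollify (mollifier n) ρ x) := by
  have hρ : LocallyIntegrable ρ volume := S.density_memLp_six.locallyIntegrable (by norm_num)
  simp only [← pd_mollify (isTest_mollifier n) hρ]
  simp only [(S.velocity _).integral_mul_deriv_comp_mul_pd hb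
    (contDiff_mollify (isTest_mollifier n) hρ) hζ]
  simp only [Finset.sum_sub_distrib, Finset.sum_neg_distrib, mul_right_comm _ (deriv b _)]
  ring

-- The weak form of `div(b(ρ)u) + (ρb'(ρ) - b(ρ)) div u = 0`.
lemma sum_integral_renormalized (S : IntegrableSolution μ η γ ρ u du dG w Φ) {b : ℝ → ℝ}
    (hb : ContDiff ℝ 1 b) {M M' : ℝ} (hM : ∀ s, |b s| ≤ M) (hM' : ∀ s, |deriv b s| ≤ M')
    {ζ : E3 → ℝ} (hζ : IsTest univ ζ) :
    ∑ i, ∫ x, ζ x * (ρ x * deriv b (ρ x) - b (ρ x)) * du i i x =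
      ∑ i, ∫ x, pd ζ i x * u i x * b (ρ x) := by
  have hρ : LocallyIntegrable ρ volume := S.density_memLp_six.locallyIntegrable (by norm_num)
  have hb' : Continuous (deriv b) := hb.continuous_deriv le_rfl
  have hint : ∀ i, Integrable (fun x => ζ x * du i i x) volume := fun i =>
    integrable_mul_of_memLp (hζ.memLp 2) (S.velocity_grad_memLp i i)
  have hF : ∀ n, Continuous fun x => ζ x * deriv b (mollify (mollifier n) ρ x) := fun n =>
    hζ.continuous.mul (hb'.comp (contDiff_mollify (isTest_mollifier n) hρ).continuous)
  have hcompact : ∀ n, HasCompactSupport fun x => ζ x * deriv b (mollify (mollifier n) ρ x) :=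
    fun n => hζ.hasCompactSupport.mul_right
  have commutator := S.tendsto_commutator
    (F := fun n x => ζ x * deriv b (mollify (mollifier n) ρ x))
    (fun n => (hF n).memLp_of_hasCompactSupport (hcompact n))
    (fun n => (hF n).memLp_of_hasCompactSupport (hcompact n))
    (fun n => lpNorm_mono_real ((hζ.memLp 3).abs.mul_const M') fun x => by
      rw [norm_mul]
      exact mul_le_mul_of_nonneg_left (hM' _) (abs_nonneg _))
  have limit := ((tendsto_finsetSum Finset.univ fun i _ => tendsto_integral_mul_comp_mollify hρ
      (S.integrable_test_mul_density_mul_grad hζ i i) hb' hM').sub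
    (tendsto_finsetSum Finset.univ fun i _ =>
      tendsto_integral_mul_comp_mollify hρ (hint i) hb.continuous hM)).sub
    (tendsto_finsetSum Finset.univ fun i _ => tendsto_integral_mul_comp_mollify hρ
      (integrable_mul_of_memLp ((hζ.pd i).memLp (.ofReal (6 / 5))) (S.velocity_memLp i))
      hb.continuous hM)
  have key := tendsto_nhds_unique limit (commutator.congr (S.commutator_eq_renormalized hb hζ))
  rw [sub_eq_zero, ← Finset.sum_sub_distrib] at key
  rw [← key]
  refine Finset.sum_congr rfl fun i _ => ?_
  rw [← integral_sub
    ((S.integrable_test_mul_density_mul_grad hζ i i).mul_bdd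
      (hb'.comp_aestronglyMeasurable S.density_memLp_six.1) (Eventually.of_forall fun x => hM' _))
    ((hint i).mul_bdd (hb.continuous.comp_aestronglyMeasurable S.density_memLp_six.1)
      (Eventually.of_forall fun x => hM _))]
  refine integral_congr_ae (Eventually.of_forall fun x => ?_)
  simp only
  ring

end IntegrableSolution

section TruncatedPower

variable {γ δ : ℝ}

/-- A bounded `C¹` truncation of `s ↦ |s| ^ γ`, which it approximates as `δ` tends to `0`. -/
def truncPow (γ δ s : ℝ) : ℝ := |s| ^ γ / (1 + δ * |s| ^ γ)

lemma one_le_one_add_mul_abs_rpow (hδ : 0 ≤ δ) (s : ℝ) : 1 ≤ 1 + δ * |s| ^ γ :=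
  le_add_of_nonneg_right (by positivity)

lemma one_add_mul_abs_rpow_pos (hδ : 0 ≤ δ) (s : ℝ) : 0 < 1 + δ * |s| ^ γ :=
  zero_lt_one.trans_le (one_le_one_add_mul_abs_rpow hδ s)

lemma contDiff_truncPow (hγ : 1 < γ) (hδ : 0 ≤ δ) : ContDiff ℝ 1 (truncPow γ δ) := by
  have hpow : ContDiff ℝ 1 fun s : ℝ => |s| ^ γ := contDiff_norm_rpow hγ
  exact hpow.div (contDiff_const.add (contDiff_const.mul hpow)) fun s =>
    (one_add_mul_abs_rpow_pos hδ s).ne'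

lemma deriv_truncPow (hγ : 1 < γ) (hδ : 0 ≤ δ) (s : ℝ) :
    deriv (truncPow γ δ) s = γ * |s| ^ (γ - 2) * s / (1 + δ * |s| ^ γ) ^ 2 := by
  have hpow := hasDerivAt_abs_rpow s hγ
  have hquot : HasDerivAt (truncPow γ δ) _ s :=
    hpow.div ((hpow.const_mul δ).const_add 1) (one_add_mul_abs_rpow_pos hδ s).ne'
  rw [hquot.deriv]
  ring

lemma truncPow_nonneg (hδ : 0 ≤ δ) (s : ℝ) : 0 ≤ truncPow γ δ s :=
  div_nonneg (by positivity) (one_add_mul_abs_rpow_pos hδ s).le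

lemma truncPow_le_abs_rpow (hδ : 0 ≤ δ) (s : ℝ) : truncPow γ δ s ≤ |s| ^ γ :=
  div_le_self (by positivity) (one_le_one_add_mul_abs_rpow hδ s)

lemma abs_truncPow_le_inv (hδ : 0 < δ) (s : ℝ) : |truncPow γ δ s| ≤ δ⁻¹ := by
  rw [abs_of_nonneg (truncPow_nonneg hδ.le s), truncPow,
    div_le_iff₀ (one_add_mul_abs_rpow_pos hδ.le s), mul_add, inv_mul_cancel_left₀ hδ.ne']
  exact le_add_of_nonneg_left (by positivity)

lemma abs_rpow_sub_two_mul_abs (hγ : 1 < γ) (s : ℝ) : |s| ^ (γ - 2) * |s| = |s| ^ (γ - 1) := by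
  rw [← Real.rpow_add_one' (abs_nonneg s) (by linarith)]
  ring_nf

lemma abs_deriv_truncPow_le (hγ : 1 < γ) (hδ : 0 < δ) (hδ1 : δ ≤ 1) (s : ℝ) :
    |deriv (truncPow γ δ) s| ≤ γ / δ := by
  have hpow : |s| ^ (γ - 1) ≤ 1 + |s| ^ γ := by
    simpa using rpow_le_rpow_add_rpow (a := 0) (abs_nonneg s) (sub_pos.2 hγ)
      (sub_nonneg.2 hγ.le) (sub_le_self γ zero_le_one)
  have hden : |s| ^ (γ - 1) * δ ≤ (1 + δ * |s| ^ γ) ^ 2 :=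
    calc |s| ^ (γ - 1) * δ ≤ (1 + |s| ^ γ) * δ := by gcongr
      _ ≤ 1 + δ * |s| ^ γ := by linarith
      _ ≤ (1 + δ * |s| ^ γ) ^ 2 := le_self_pow₀ (one_le_one_add_mul_abs_rpow hδ.le s) two_ne_zero
  rw [deriv_truncPow hγ hδ.le, mul_assoc, abs_div, abs_mul, abs_mul,
    abs_of_pos (by linarith : 0 < γ), Real.abs_rpow_of_nonneg (abs_nonneg s), abs_abs,
    abs_rpow_sub_two_mul_abs hγ, abs_of_pos (by positivity : 0 < (1 + δ * |s| ^ γ) ^ 2),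
    div_le_div_iff₀ (by positivity) hδ, mul_assoc]
  gcongr

lemma mul_deriv_truncPow (hγ : 1 < γ) (hδ : 0 ≤ δ) (s : ℝ) :
    s * deriv (truncPow γ δ) s = γ * |s| ^ γ / (1 + δ * |s| ^ γ) ^ 2 := by
  have hpow : |s| ^ (γ - 2) * s * s = |s| ^ γ := by
    rw [mul_assoc, ← abs_mul_abs_self s, ← mul_assoc, abs_rpow_sub_two_mul_abs hγ,
      ← Real.rpow_add_one' (abs_nonneg s) (by linarith), sub_add_cancel]
  rw [deriv_truncPow hγ hδ, ← hpow]
  ring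

lemma abs_mul_deriv_truncPow_sub_le (hγ : 1 < γ) (hδ : 0 ≤ δ) (s : ℝ) :
    |s * deriv (truncPow γ δ) s - truncPow γ δ s| ≤ γ * |s| ^ γ := by
  have hnonneg := truncPow_nonneg (γ := γ) hδ s
  have hle := truncPow_le_abs_rpow (γ := γ) hδ s
  have hone := one_le_one_add_mul_abs_rpow (γ := γ) hδ s
  rw [mul_deriv_truncPow hγ hδ, abs_le]
  have hterm : 0 ≤ γ * |s| ^ γ / (1 + δ * |s| ^ γ) ^ 2 := by positivity
  have hterm_le : γ * |s| ^ γ / (1 + δ * |s| ^ γ) ^ 2 ≤ γ * |s| ^ γ :=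
    div_le_self (by positivity) (one_le_pow₀ hone)
  constructor <;> nlinarith

lemma tendsto_mul_deriv_truncPow_sub {ι : Type*} {l : Filter ι} {δ : ι → ℝ} (hγ : 1 < γ)
    (hδ : ∀ n, 0 ≤ δ n) (hδ0 : Tendsto δ l (𝓝 0)) (s : ℝ) :
    Tendsto (fun n => s * deriv (truncPow γ (δ n)) s - truncPow γ (δ n) s) l
      (𝓝 ((γ - 1) * |s| ^ γ)) := by
  have hden : Tendsto (fun n => 1 + δ n * |s| ^ γ) l (𝓝 1) := by
    simpa using (hδ0.mul_const (|s| ^ γ)).const_add 1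
  have hlimit := ((tendsto_const_nhds (x := γ * |s| ^ γ)).div (hden.pow 2) (by norm_num)).sub
    ((tendsto_const_nhds (x := |s| ^ γ)).div hden one_ne_zero)
  rw [one_pow, div_one, div_one, ← sub_one_mul] at hlimit
  simpa only [mul_deriv_truncPow hγ (hδ _), truncPow, Pi.div_apply] using hlimit

end TruncatedPower

namespace IntegrableSolution

variable {μ η γ : ℝ} {ρ : E3 → ℝ} {u : Fin 3 → E3 → ℝ} {du : Fin 3 → Fin 3 → E3 → ℝ}
  {dG : Fin 3 → E3 → ℝ} {w : Fin 3 → ℕ → E3 → ℝ} {Φ : ℕ → E3 → ℝ}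

lemma integrable_pressure_mul_abs_velocity (S : IntegrableSolution μ η γ ρ u du dG w Φ)
    (i : Fin 3) : Integrable (fun x => ρ x ^ γ * |u i x|) volume := by
  refine (S.integrable_pressure.add (integrable_mul_of_memLp S.pressure_memLp_two
    (S.abs_velocity_cube_memLp i))).mono'
    (S.integrable_pressure.1.mul (S.velocity_memLp i).abs.1) (Eventually.of_forall fun x => ?_)
  have hP : 0 ≤ ρ x ^ γ := Real.rpow_nonneg (S.density_nonneg x) _
  have hcube : |u i x| ≤ 1 + |u i x| ^ 3 := by
    simpa using rpow_le_rpow_add_rpow (abs_nonneg (u i x)) one_pos (a := 0) (c := 3)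
      zero_le_one (by norm_num)
  rw [Real.norm_of_nonneg (by positivity)]
  calc ρ x ^ γ * |u i x| ≤ ρ x ^ γ * (1 + |u i x| ^ 3) := by gcongr
    _ = ρ x ^ γ + ρ x ^ γ * |u i x| ^ 3 := by ring

lemma tendsto_integral_cutoff_mul_truncPow_mul_div (S : IntegrableSolution μ η γ ρ u du dG w Φ)
    {δ : ℕ → ℝ} (hδ : ∀ n, 0 ≤ δ n) (hδ0 : Tendsto δ atTop (𝓝 0)) (i : Fin 3) :
    Tendsto (fun n => ∫ x, cutoff n x * (ρ x * deriv (truncPow γ (δ n)) (ρ x) -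
      truncPow γ (δ n) (ρ x)) * du i i x) atTop (𝓝 ((γ - 1) * ∫ x, ρ x ^ γ * du i i x)) := by
  have hγ : 1 < γ := by linarith [S.three_le]
  have hP : ∀ x, 0 ≤ ρ x ^ γ := fun x => Real.rpow_nonneg (S.density_nonneg x) _
  have hint := integrable_mul_of_memLp S.pressure_memLp_two (S.velocity_grad_memLp i i)
  have hρ := S.density_memLp_six.1
  rw [← integral_const_mul]
  refine tendsto_integral_of_dominated_convergence (fun x => γ * |ρ x ^ γ * du i i x|)
    (fun n => ?_) (hint.abs.const_mul γ) (fun n => Eventually.of_forall fun x => ?_)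
    (Eventually.of_forall fun x => ?_)
  · have hb := contDiff_truncPow hγ (hδ n)
    exact ((isTest_cutoff n).continuous.aestronglyMeasurable.mul
      ((hρ.mul ((hb.continuous_deriv le_rfl).comp_aestronglyMeasurable hρ)).sub
        (hb.continuous.comp_aestronglyMeasurable hρ))).mul (S.velocity_grad_memLp i i).1
  · have hbound := abs_mul_deriv_truncPow_sub_le hγ (hδ n) (ρ x)
    rw [abs_of_nonneg (S.density_nonneg x)] at hbound
    rw [norm_mul, norm_mul, Real.norm_eq_abs, Real.norm_eq_abs, Real.norm_eq_abs, abs_mul (ρ x ^ γ),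
      abs_of_nonneg (hP x), ← mul_assoc]
    exact mul_le_mul_of_nonneg_right ((mul_le_of_le_one_left (abs_nonneg _)
      (abs_cutoff_le_one n x)).trans hbound) (abs_nonneg _)
  · have hlimit := ((tendsto_const_nhds.congr' ((eventually_cutoff_eq_one x).mono fun n hn =>
      hn.symm)).mul (tendsto_mul_deriv_truncPow_sub hγ hδ hδ0 (ρ x))).mul_const (du i i x)
    rwa [one_mul, abs_of_nonneg (S.density_nonneg x), mul_assoc] at hlimit

lemma tendsto_integral_pd_cutoff_mul_truncPow (S : IntegrableSolution μ η γ ρ u du dG w Φ)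
    {δ : ℕ → ℝ} (hδ : ∀ n, 0 ≤ δ n) (i : Fin 3) :
    Tendsto (fun n => ∫ x, pd (cutoff n) i x * u i x * truncPow γ (δ n) (ρ x)) atTop (𝓝 0) := by
  obtain ⟨C, hC0, hC⟩ := exists_abs_pd_cutoff_le
  have hlimit := (tendsto_const_div_natCast_add_one C).mul_const (∫ x, ρ x ^ γ * |u i x|)
  rw [zero_mul] at hlimit
  refine squeeze_zero_norm (fun n => ?_) hlimit
  rw [← integral_const_mul]
  refine norm_integral_le_of_norm_le ((S.integrable_pressure_mul_abs_velocity i).const_mul _)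
    (Eventually.of_forall fun x => ?_)
  have htrunc := truncPow_le_abs_rpow (γ := γ) (hδ n) (ρ x)
  rw [abs_of_nonneg (S.density_nonneg x)] at htrunc
  rw [norm_mul, norm_mul, Real.norm_eq_abs, Real.norm_eq_abs,
    Real.norm_of_nonneg (truncPow_nonneg (hδ n) _)]
  calc |pd (cutoff n) i x| * |u i x| * truncPow γ (δ n) (ρ x)
      ≤ C / ((n : ℝ) + 1) * |u i x| * ρ x ^ γ := by
        gcongr
        · exact truncPow_nonneg (hδ n) _
        · exact hC n i x
    _ = C / ((n : ℝ) + 1) * (ρ x ^ γ * |u i x|) := by ring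

lemma sum_integral_pressure_mul_div (S : IntegrableSolution μ η γ ρ u du dG w Φ) :
    ∑ i, ∫ x, ρ x ^ γ * du i i x = 0 := by
  have hγ : 1 < γ := by linarith [S.three_le]
  have hδ : ∀ n : ℕ, 0 < 1 / ((n : ℝ) + 1) := fun n => by positivity
  have hδ1 : ∀ n : ℕ, 1 / ((n : ℝ) + 1) ≤ 1 := fun n =>
    div_le_one_of_le₀ (le_add_of_nonneg_left (Nat.cast_nonneg n)) (by positivity)
  have hleft := tendsto_finsetSum Finset.univ fun i (_ : i ∈ Finset.univ) =>
    S.tendsto_integral_cutoff_mul_truncPow_mul_div (fun n => (hδ n).le)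
      tendsto_one_div_add_atTop_nhds_zero_nat i
  have hright := tendsto_finsetSum Finset.univ fun i (_ : i ∈ Finset.univ) =>
    S.tendsto_integral_pd_cutoff_mul_truncPow (fun n => (hδ n).le) i
  have hrenorm := fun n : ℕ => S.sum_integral_renormalized (contDiff_truncPow hγ (hδ n).le)
    (abs_truncPow_le_inv (hδ n)) (abs_deriv_truncPow_le hγ (hδ n) (hδ1 n)) (isTest_cutoff n)
  have hzero := tendsto_nhds_unique hleft (hright.congr fun n => (hrenorm n).symm)
  rw [← Finset.mul_sum, Finset.sum_const_zero] at hzero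
  exact (mul_eq_zero.1 hzero).resolve_left (by linarith)

end IntegrableSolution

section Ellipticity

variable {w : Fin 3 → E3 → ℝ}

lemma integral_div_sq_le_sum_lpNorm_sq (hw : ∀ i, IsTest univ (w i)) :
    ∫ x, (∑ i, pd (w i) i x) ^ 2 ≤ ∑ i, ∑ j, lpNorm (pd (w i) j) 2 volume ^ 2 := by
  have hsq : ∀ i j, Integrable (fun x => pd (w i) j x ^ 2) volume := fun i j =>
    (((hw i).pd j).memLp 2).integrable_sq
  have hcross : ∀ i j, ∫ x, pd (w i) j x * pd (w j) i x ≤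
      (lpNorm (pd (w i) j) 2 volume ^ 2 + lpNorm (pd (w j) i) 2 volume ^ 2) / 2 := by
    intro i j
    rw [lpNorm_two_sq_eq_integral (((hw i).pd j).memLp 2),
      lpNorm_two_sq_eq_integral (((hw j).pd i).memLp 2), ← integral_add (hsq i j) (hsq j i),
      ← integral_div]
    refine integral_mono (integrable_mul_of_memLp (((hw i).pd j).memLp 2)
      (((hw j).pd i).memLp 2)) (((hsq i j).add (hsq j i)).div_const 2) fun x => ?_
    simp only
    linarith [two_mul_le_add_sq (pd (w i) j x) (pd (w j) i x)]
  rw [← sum_integral_pd_mul_pd_swap hw]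
  refine (Finset.sum_le_sum fun i _ => Finset.sum_le_sum fun j _ => hcross i j).trans_eq ?_
  simp only [add_div, Finset.sum_add_distrib]
  rw [Finset.sum_comm (f := fun i j => lpNorm (pd (w j) i) 2 volume ^ 2 / 2)]
  simp only [← Finset.sum_div, add_halves]

lemma integral_stress_mul_pd (μ η : ℝ) (hw : ∀ i, IsTest univ (w i)) (i j : Fin 3) :
    ∫ x, stress μ η (fun k => pd (w k)) i j x * pd (w i) j x =
      μ * lpNorm (pd (w i) j) 2 volume ^ 2 + μ * (∫ x, pd (w i) j x * pd (w j) i x) +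
        if i = j then (η - 2 / 3 * μ) * ∑ k, ∫ x, pd (w i) i x * pd (w k) k x else 0 := by
  have hint : ∀ k l, Integrable (fun x => pd (w i) j x * pd (w k) l x) volume := fun k l =>
    integrable_mul_of_memLp (((hw i).pd j).memLp 2) (((hw k).pd l).memLp 2)
  have hsq : Integrable (fun x => μ * pd (w i) j x ^ 2) volume :=
    (((hw i).pd j).memLp 2).integrable_sq.const_mul μ
  have hsum : Integrable (fun x => μ * pd (w i) j x ^ 2 + μ * (pd (w i) j x * pd (w j) i x))
      volume := hsq.add ((hint j i).const_mul μ)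
  rw [lpNorm_two_sq_eq_integral (((hw i).pd j).memLp 2), ← integral_const_mul,
    ← integral_const_mul, ← integral_add hsq ((hint j i).const_mul μ)]
  split_ifs with hij
  · subst hij
    rw [← integral_finsetSum _ fun k _ => hint k k, ← integral_const_mul, ← integral_add hsum
      ((integrable_finsetSum _ fun k _ => hint k k).const_mul (η - 2 / 3 * μ))]
    refine integral_congr_ae (Eventually.of_forall fun x => ?_)
    simp only [stress, Smat, if_true, ← Finset.mul_sum]
    ring
  · rw [add_zero]
    refine integral_congr_ae (Eventually.of_forall fun x => ?_)
    simp only [stress, Smat, if_neg hij]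
    ring

lemma sum_integral_stress_mul_pd (μ η : ℝ) (hw : ∀ i, IsTest univ (w i)) :
    ∑ i, ∑ j, ∫ x, stress μ η (fun k => pd (w k)) i j x * pd (w i) j x =
      μ * ∑ i, ∑ j, lpNorm (pd (w i) j) 2 volume ^ 2 +
        (μ / 3 + η) * ∫ x, (∑ i, pd (w i) i x) ^ 2 := by
  have hdiv : ∑ i, ∑ j, ∫ x, pd (w i) i x * pd (w j) j x = ∫ x, (∑ i, pd (w i) i x) ^ 2 := by
    rw [← sum_integral_pd_mul_pd_swap hw]
    exact Finset.sum_congr rfl fun i _ => Finset.sum_congr rfl fun j _ =>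
      (hw i).integral_pd_mul_pd_comm (hw j) i j
  simp only [integral_stress_mul_pd μ η hw, Finset.sum_add_distrib, ← Finset.mul_sum,
    Finset.sum_ite_eq, Finset.mem_univ, if_true, hdiv, sum_integral_pd_mul_pd_swap hw]
  ring

lemma min_mul_sum_lpNorm_sq_le_sum_integral_stress (μ η : ℝ) (hw : ∀ i, IsTest univ (w i)) :
    min μ (4 / 3 * μ + η) * ∑ i, ∑ j, lpNorm (pd (w i) j) 2 volume ^ 2 ≤
      ∑ i, ∑ j, ∫ x, stress μ η (fun k => pd (w k)) i j x * pd (w i) j x := by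
  have hdiv := integral_div_sq_le_sum_lpNorm_sq hw
  have hdiv0 : 0 ≤ ∫ x, (∑ i, pd (w i) i x) ^ 2 := integral_nonneg fun x => sq_nonneg _
  rw [sum_integral_stress_mul_pd μ η hw]
  rcases le_total 0 (μ / 3 + η) with hnonneg | hneg
  · rw [min_eq_left (by linarith)]
    exact le_add_of_nonneg_right (mul_nonneg hnonneg hdiv0)
  · rw [min_eq_right (by linarith)]
    linarith [mul_le_mul_of_nonpos_left hdiv hneg]

end Ellipticity

namespace IntegrableSolution

variable {μ η γ : ℝ} {ρ : E3 → ℝ} {u : Fin 3 → E3 → ℝ} {du : Fin 3 → Fin 3 → E3 → ℝ}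
  {dG : Fin 3 → E3 → ℝ} {w : Fin 3 → ℕ → E3 → ℝ} {Φ : ℕ → E3 → ℝ}

lemma sum_integral_convection_mul_grad (S : IntegrableSolution μ η γ ρ u du dG w Φ) (i : Fin 3) :
    ∑ j, ∫ x, ρ x * u i x * u j x * du i j x = 0 := by
  have hlimit : ∀ j, TendstoInLp 1 volume (fun n x => ρ x * u j x * w i n x * pd (w i n) j x) atTop
      fun x => ρ x * u j x * u i x * du i j x := fun j =>
    ((TendstoInLp.const (S.momentum_memLp_three j)).mul (r := 2) (by norm_num) one_le_two
      (S.velocity i).tendsto).mul one_le_two le_rfl ((S.velocity i).tendsto_pd j)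
  simp only [mul_right_comm (ρ _) (u i _) (u _ _)]
  rw [← integral_finsetSum _ fun j _ => memLp_one_iff_integrable.1 (hlimit j).memLp_limit]
  refine tendsto_nhds_unique (TendstoInLp.sum le_rfl Finset.univ hlimit).tendsto_integral
    (tendsto_const_nhds.congr fun n => ?_)
  have hw := (S.velocity i).isTest n
  have hmass := S.mass (fun x => w i n x * w i n x)
    (isTest_univ_iff.2 ⟨hw.1.mul hw.1, hw.hasCompactSupport.mul_right⟩)
  have hpair : ∀ x, ρ x * ∑ j, u j x * pd (fun y => w i n y * w i n y) j x =
      2 * ∑ j, ρ x * u j x * w i n x * pd (w i n) j x := by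
    intro x
    simp only [Finset.mul_sum, pd_fun_mul hw.differentiable hw.differentiable]
    exact Finset.sum_congr rfl fun j _ => by ring
  simp only [hpair, integral_const_mul] at hmass
  linarith

lemma sum_integral_force_mul_velocity (S : IntegrableSolution μ η γ ρ u du dG w Φ) :
    ∑ i, ∫ x, ρ x * dG i x * u i x = 0 := by
  have := holderConjugate_momentumExponent_forceExponent (show 6 < 5 * γ by linarith [S.three_le])
  have hlimit : ∀ i, TendstoInLp 1 volume (fun n x => ρ x * u i x * pd (Φ n) i x) atTop
      fun x => ρ x * u i x * dG i x := fun i =>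
    (TendstoInLp.const (S.density_mul_memLp (S.velocity_memLp i))).mul
      (ENNReal.HolderConjugate.one_le _ (forceExponent γ)) le_rfl (S.tendsto_force i)
  rw [← integral_finsetSum _ fun i _ => S.integrable_force_mul i (S.velocity_memLp i)]
  simp only [mul_right_comm _ (dG _ _)]
  refine tendsto_nhds_unique (TendstoInLp.sum le_rfl Finset.univ hlimit).tendsto_integral
    (tendsto_const_nhds.congr fun n => ?_)
  rw [← S.mass _ (S.isTest_potential n)]
  simp only [Finset.mul_sum, mul_assoc]

lemma tendsto_integral_force_mul (S : IntegrableSolution μ η γ ρ u du dG w Φ) (i : Fin 3) :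
    Tendsto (fun n => ∫ x, ρ x * dG i x * w i n x) atTop (𝓝 (∫ x, ρ x * dG i x * u i x)) := by
  have hγ := S.three_le
  have := holderTriple_momentumExponent (show 0 < γ by linarith)
  have := holderConjugate_momentumExponent_forceExponent (show 6 < 5 * γ by linarith)
  have hone : 1 ≤ ENNReal.ofReal γ := ENNReal.one_le_ofReal.2 (by linarith)
  have hone' : 1 ≤ momentumExponent γ := ENNReal.HolderConjugate.one_le _ (forceExponent γ)
  have hlimit := ((TendstoInLp.const S.density_memLp).mul (r := momentumExponent γ) hone hone'
    (S.velocity i).tendsto).mul (r := 1) hone' le_rfl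
      (.const (S.tendsto_force i).memLp_limit)
  simpa only [mul_right_comm _ (dG i _)] using hlimit.tendsto_integral

lemma tendsto_integral_mul_pd (S : IntegrableSolution μ η γ ρ u du dG w Φ) {f : E3 → ℝ}
    (hf : MemLp f 2 volume) (i j : Fin 3) :
    Tendsto (fun n => ∫ x, f x * pd (w i n) j x) atTop (𝓝 (∫ x, f x * du i j x)) :=
  ((TendstoInLp.const hf).mul one_le_two le_rfl ((S.velocity i).tendsto_pd j)).tendsto_integral

lemma sum_integral_stress_mul_grad (S : IntegrableSolution μ η γ ρ u du dG w Φ) :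
    ∑ i, ∑ j, ∫ x, stress μ η du i j x * du i j x = 0 := by
  have hconvection : ∀ i j, MemLp (fun x => ρ x * u i x * u j x) 2 volume := fun i j =>
    (S.velocity_memLp j).mul (S.momentum_memLp_three i)
  have hleft := (tendsto_finsetSum Finset.univ fun i _ => tendsto_finsetSum Finset.univ fun j _ =>
    S.tendsto_integral_mul_pd (hconvection i j) i j).add (tendsto_finsetSum Finset.univ fun i _ =>
      S.tendsto_integral_mul_pd S.pressure_memLp_two i i)
  have hright := (tendsto_finsetSum Finset.univ fun i _ => tendsto_finsetSum Finset.univ fun j _ =>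
    S.tendsto_integral_mul_pd (S.stress_memLp i j) i j).sub
      (tendsto_finsetSum Finset.univ fun i _ => S.tendsto_integral_force_mul i)
  have identity := tendsto_nhds_unique hright (hleft.congr fun n => ?_)
  · simpa only [S.sum_integral_force_mul_velocity, S.sum_integral_convection_mul_grad,
      S.sum_integral_pressure_mul_div, Finset.sum_const_zero, add_zero, sub_zero] using identity
  · have hw := fun i => (S.velocity i).isTest n
    rw [← S.momentum_components hw]
    simp only [Finset.mul_sum,
      integral_finsetSum _ fun i _ => S.integrable_pressure_mul ((hw i).pd i)]

lemma tendsto_sum_lpNorm_sq_pd (S : IntegrableSolution μ η γ ρ u du dG w Φ) (hμ : 0 < μ)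
    (hη : 0 < 4 / 3 * μ + η) :
    Tendsto (fun n => ∑ i, ∑ j, lpNorm (pd (w i n) j) 2 volume ^ 2) atTop (𝓝 0) := by
  have hlimit := tendsto_finsetSum Finset.univ fun i _ => tendsto_finsetSum Finset.univ fun j _ =>
    ((S.tendsto_stress i j).mul (r := 1) one_le_two le_rfl
      ((S.velocity i).tendsto_pd j)).tendsto_integral
  have hmin : 0 < min μ (4 / 3 * μ + η) := lt_min hμ hη
  rw [S.sum_integral_stress_mul_grad] at hlimit
  refine squeeze_zero (fun n => Finset.sum_nonneg fun i _ => Finset.sum_nonneg fun j _ =>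
    sq_nonneg _) (fun n => ?_) (by simpa using hlimit.const_mul (min μ (4 / 3 * μ + η))⁻¹)
  rw [le_inv_mul_iff₀ hmin]
  exact min_mul_sum_lpNorm_sq_le_sum_integral_stress μ η fun i => (S.velocity i).isTest n

lemma velocity_ae_eq_zero (S : IntegrableSolution μ η γ ρ u du dG w Φ) (hμ : 0 < μ)
    (hη : 0 < 4 / 3 * μ + η) (i : Fin 3) : u i =ᵐ[volume] 0 := by
  have hgrad : ∀ j, Tendsto (fun n => lpNorm (pd (w i n) j) 2 volume) atTop (𝓝 0) := fun j => by
    have hsq : Tendsto (fun n => lpNorm (pd (w i n) j) 2 volume ^ 2) atTop (𝓝 0) :=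
      squeeze_zero (fun n => sq_nonneg _) (fun n =>
        (Finset.single_le_sum (f := fun j => lpNorm (pd (w i n) j) 2 volume ^ 2)
          (fun j _ => sq_nonneg _) (Finset.mem_univ j)).trans
        (Finset.single_le_sum (f := fun i => ∑ j, lpNorm (pd (w i n) j) 2 volume ^ 2)
          (fun i _ => Finset.sum_nonneg fun j _ => sq_nonneg _) (Finset.mem_univ i)))
        (S.tendsto_sum_lpNorm_sq_pd hμ hη)
    simpa only [Real.sqrt_sq lpNorm_nonneg, Real.sqrt_zero] using hsq.sqrt
  obtain ⟨C, -, sobolev⟩ := exists_sobolev_const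
  have happrox : Tendsto (fun n => lpNorm (w i n) 6 volume) atTop (𝓝 0) :=
    squeeze_zero (fun n => lpNorm_nonneg) (fun n => sobolev _ ((S.velocity i).isTest n))
      (by simpa using (tendsto_finsetSum Finset.univ fun j _ => hgrad j).const_mul C)
  exact (lpNorm_eq_zero (S.velocity_memLp i) (by norm_num)).1
    (tendsto_nhds_unique ((S.velocity i).tendsto.tendsto_lpNorm (by norm_num)) happrox)

end IntegrableSolution

section WeakSolution

variable {φ : E3 → Fin 3 → ℝ}

lemma IsTestVec.apply (hφ : IsTestVec ((⊤ : ℕ∞) : WithTop ℕ∞) univ φ) (i : Fin 3) :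
    IsTest univ fun x => φ x i :=
  ⟨contDiff_pi.1 hφ.1 i, hφ.2.1.comp_left (g := fun v : Fin 3 → ℝ => v i) rfl, subset_univ _⟩

lemma isTestVec_of_isTest {n : ℕ∞} (hφ : ∀ i, IsTest univ fun x => φ x i) :
    IsTestVec n univ φ := by
  refine ⟨contDiff_pi.2 fun i => (hφ i).1.of_le (by exact_mod_cast le_top), ?_, subset_univ _⟩
  refine HasCompactSupport.of_support_subset_isCompact
    (isCompact_iUnion fun i => (hφ i).hasCompactSupport) fun x hx => ?_
  obtain ⟨i, hi⟩ := Function.ne_iff.1 hx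
  exact mem_iUnion.2 ⟨i, subset_tsupport _ hi⟩

variable {μ η γ q : ℝ} {G ρ : E3 → ℝ} {u dG : E3 → Fin 3 → ℝ} {du : E3 → Fin 3 → Fin 3 → ℝ}

lemma MemD012.exists_testApprox (hu : MemD012 univ u du) (hmeas : AEMeasurable u volume) :
    ∃ w : Fin 3 → ℕ → E3 → ℝ, ∀ i, TestApprox (w i) (fun x => u x i) fun j x => du x i j := by
  obtain ⟨-, -, hdu, un, hun, hgrad, hval⟩ := hu
  simp only [Measure.restrict_univ] at hdu hgrad hval
  have hvalue : TendstoInLp 6 volume un atTop u :=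
    .of_tendsto_eLpNorm (fun n => .of_eval fun i => ((hun n).apply i).memLp 6)
      hmeas.aestronglyMeasurable hval
  have hgradient : TendstoInLp 2 volume (fun n => tgrad (un n)) atTop du :=
    .of_tendsto_eLpNorm (fun n => .of_eval fun i => .of_eval fun j =>
      (((hun n).apply i).pd j).memLp 2) hdu.1 hgrad
  exact ⟨fun i n x => un n x i, fun i => ⟨fun n => (hun n).apply i, hvalue.eval i, fun j =>
    (hgradient.eval i).eval j⟩⟩

lemma MemD01q.exists_tendsto_pd (hG : MemD01q univ G dG q) :
    ∃ Φ : ℕ → E3 → ℝ, (∀ n, IsTest univ (Φ n)) ∧ ∀ i,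
      TendstoInLp (.ofReal q) volume (fun n => pd (Φ n) i) atTop fun x => dG x i := by
  obtain ⟨-, hdG, Gn, hGn, hgrad, -⟩ := hG
  simp only [Measure.restrict_univ] at hdG hgrad
  have hgradient : TendstoInLp (.ofReal q) volume (fun n x i => pd (Gn n) i x) atTop dG :=
    .of_tendsto_eLpNorm (fun n => .of_eval fun i => ((hGn n).pd i).memLp _) hdG.1 hgrad
  exact ⟨Gn, hGn, hgradient.eval⟩

lemma IsentropicWeakSolution.exists_integrableSolution (hγ : 3 ≤ γ) (hγ' : γ ≤ 6)
    (hG : MemD01q univ G dG (6 * γ / (5 * γ - 6)))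
    (hsol : IsentropicWeakSolution μ η γ G dG ρ u du)
    (hρ : MemLp ρ (ENNReal.ofReal γ) volume) :
    ∃ w Φ, IntegrableSolution μ η γ (fun x => max (ρ x) 0) (fun i x => u x i)
      (fun i j x => du x i j) (fun i x => dG x i) w Φ := by
  obtain ⟨w, hw⟩ := hsol.u_D012.exists_testApprox hsol.aemeas_u
  obtain ⟨Φ, hΦ, hforce⟩ := hG.exists_tendsto_pd
  have hnonneg := hsol.ρ_nonneg
  have hmass := hsol.mass
  have hmomentum := hsol.momentum
  simp only [Measure.restrict_univ] at hnonneg hmass hmomentum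
  have hmax : ρ =ᵐ[volume] fun x => max (ρ x) 0 :=
    hnonneg.mono fun x hx => (max_eq_left hx).symm
  refine ⟨w, Φ, hγ, hγ', fun x => le_max_right _ _, (memLp_congr_ae hmax).1 hρ, hw, hΦ, hforce,
    fun φ hφ => ?_, fun φ hφ => ?_⟩
  · refine (integral_congr_ae (hmax.mono fun x hx => ?_)).trans
      (hmass φ hφ.1 hφ.hasCompactSupport)
    simp only [← hx]
  · convert hmomentum (fun x i => φ i x) (isTestVec_of_isTest hφ) using 1
    · exact integral_congr_ae (hmax.mono fun x hx => by simp only [← hx]; rfl)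
    · congr 1
      exact integral_congr_ae (hmax.mono fun x hx => by simp only [← hx])

end WeakSolution

theorem liouville_isentropic_Lgamma_general
    (μ η γ : ℝ) (hμ : 0 < μ) (hη : 0 < 4 / 3 * μ + η) (hγ1 : 3 ≤ γ) (hγ2 : γ ≤ 6)
    (G : E3 → ℝ) (dG : E3 → Fin 3 → ℝ)
    (ρ : E3 → ℝ) (u : E3 → Fin 3 → ℝ) (du : E3 → Fin 3 → Fin 3 → ℝ)
    (hG : MemD01q univ G dG (6 * γ / (5 * γ - 6)))
    (hsol : IsentropicWeakSolution μ η γ G dG ρ u du)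
    (hργ : MemLp ρ (ENNReal.ofReal γ) volume) :
    ∀ᵐ x, u x = 0 := by
  obtain ⟨w, Φ, S⟩ := hsol.exists_integrableSolution hγ1 hγ2 hG hργ
  filter_upwards [ae_all_iff.2 fun i => S.velocity_ae_eq_zero hμ hη i] with x hx
  exact funext hx

/-- **Theorem 7.** Let `(ρ, u)` be a weak solution of the stationary isentropic system on `ℝ³`
with `3 ≤ γ < 6` and `G ∈ D₀^{1, 6γ/(5γ−6)}(ℝ³)`. If `ρ ∈ L^γ(ℝ³)`, then `u = 0` a.e. -/
theorem liouville_isentropic_Lgamma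
    (μ η γ : ℝ) (hμ : 0 < μ) (hη : 0 ≤ η) (hγ1 : 3 ≤ γ) (hγ2 : γ < 6)
    (G : E3 → ℝ) (dG : E3 → Fin 3 → ℝ)
    (ρ : E3 → ℝ) (u : E3 → Fin 3 → ℝ) (du : E3 → Fin 3 → Fin 3 → ℝ)
    (hG : MemD01q univ G dG (6 * γ / (5 * γ - 6)))
    (hsol : IsentropicWeakSolution μ η γ G dG ρ u du)
    (hργ : MemLp ρ (ENNReal.ofReal γ) volume) :
    ∀ᵐ x, u x = 0 :=
  liouville_isentropic_Lgamma_general μ η γ hμ (by positivity) hγ1 hγ2.le G dG ρ u du hG hsol hργ
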